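/- arXiv:2008.11768 — 3 statements merged into one kernel-verified Lean document; each statement's English description precedes it below -/
import Mathlib

section
/- Let d ≥ 1. There exists a constant C > 0, depending only on d, such that for every integer N ≥ 2 and every β ∈ (0, √d), ∫_{B(0,1)^N} ∏_{i=1}^N (min_{j ≠ i} |z_i − z_j|)^{−β²/2} dz_1 … dz_N ≤ C^N (d − β²)^{−⌊N/2⌋} N^{Nβ²/(2d)}. -/
open MeasureTheory

def IsNN {α : Type*} (w : α → α → ℝ) (i j : α) : Prop := j ≠ i ∧ ∀ k, k ≠ i → w i j ≤ w i k

def GoodPair {α : Type*} (w : α → α → ℝ) (A B : Finset α) : Prop :=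
  Disjoint A B ∧ (∀ i ∈ A, ∃ j ∈ B, IsNN w i j) ∧ (∀ i ∈ B, ∃ j ∈ A, IsNN w i j)

lemma GoodPair.symm {α : Type*} {w : α → α → ℝ} {A B : Finset α} (h : GoodPair w A B) :
    GoodPair w B A := ⟨h.1.symm, h.2.2, h.2.1⟩

lemma exists_isNN {α : Type*} [Fintype α] [Nontrivial α] (w : α → α → ℝ) (i : α) :
    ∃ j, IsNN w i j := by
  classical
  obtain ⟨j0, hj0⟩ := exists_ne i
  obtain ⟨j, hj, hm⟩ := Finset.exists_min_image (Finset.univ.erase i) (fun j => w i j)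
    ⟨j0, by simp [hj0]⟩
  exact ⟨j, by simpa using hj, fun k hk => hm k (by simp [hk])⟩

lemma GoodPair.insert_left {α : Type*} [DecidableEq α] {w : α → α → ℝ} {A B : Finset α}
    (h : GoodPair w A B) {i j : α} (hi : i ∉ A ∪ B) (hj : j ∈ B) (hn : IsNN w i j) :
    GoodPair w (insert i A) B := by
  obtain ⟨h1, h2, h3⟩ := h
  simp only [Finset.mem_union, not_or] at hi
  refine ⟨?_, ?_, ?_⟩
  · rw [Finset.disjoint_insert_left]; exact ⟨hi.2, h1⟩
  · intro k hk
    rcases Finset.mem_insert.1 hk with rfl | hk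
    · exact ⟨j, hj, hn⟩
    · exact h2 k hk
  · intro k hk
    obtain ⟨l, hl, hl'⟩ := h3 k hk
    exact ⟨l, Finset.mem_insert_of_mem hl, hl'⟩

lemma exists_goodPair_card {α : Type*} [Fintype α] [DecidableEq α] [Nontrivial α]
    (w : α → α → ℝ) (hw : ∀ i j, w i j = w j i) (k : ℕ) (hk : k ≤ Fintype.card α) :
    ∃ A B, GoodPair w A B ∧ k ≤ (A ∪ B).card := by
  induction k with
  | zero => exact ⟨∅, ∅, ⟨by simp, by simp, by simp⟩, by simp⟩
  | succ k ih =>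
    obtain ⟨A, B, hG, hc⟩ := ih (by omega)
    by_cases hu : A ∪ B = Finset.univ
    · exact ⟨A, B, hG, by rw [hu, Finset.card_univ]; exact hk⟩
    choose nn hnn using exists_isNN w
    have hne : (A ∪ B)ᶜ.Nonempty := by
      rw [Finset.nonempty_iff_ne_empty]; intro h; exact hu (by rwa [Finset.compl_eq_empty_iff] at h)
    obtain ⟨i, hi, him⟩ := Finset.exists_min_image (A ∪ B)ᶜ (fun i => w i (nn i)) hne
    have hi' : i ∉ A ∪ B := by simpa using hi
    by_cases hjA : nn i ∈ A
    · refine ⟨A, insert i B, (hG.symm.insert_left (by rwa [Finset.union_comm]) hjA (hnn i)).symm, ?_⟩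
      rw [Finset.union_insert, Finset.card_insert_of_notMem hi']; omega
    by_cases hjB : nn i ∈ B
    · refine ⟨insert i A, B, hG.insert_left hi' hjB (hnn i), ?_⟩
      rw [Finset.insert_union, Finset.card_insert_of_notMem hi']; omega
    have hj : IsNN w (nn i) i := by
      refine ⟨(hnn i).1.symm, fun l hl => ?_⟩
      have h1 := him (nn i) (by simp [hjA, hjB])
      have h2 := (hnn (nn i)).2 l hl
      rw [hw (nn i) i]
      exact h1.trans h2
    obtain ⟨h1, h2, h3⟩ := hG
    have hij := (hnn i).1
    simp only [Finset.mem_union, not_or] at hi'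
    refine ⟨insert i A, insert (nn i) B, ⟨?_, ?_, ?_⟩, ?_⟩
    · simp only [Finset.disjoint_insert_left, Finset.disjoint_insert_right, Finset.mem_insert, not_or]
      exact ⟨⟨hij, hjA⟩, hi'.2, h1⟩
    · intro k hk
      rcases Finset.mem_insert.1 hk with rfl | hk
      · exact ⟨nn k, by simp, hnn k⟩
      · obtain ⟨l, hl, hl'⟩ := h2 k hk
        exact ⟨l, Finset.mem_insert_of_mem hl, hl'⟩
    · intro k hk
      rcases Finset.mem_insert.1 hk with rfl | hk
      · exact ⟨i, by simp, hj⟩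
      · obtain ⟨l, hl, hl'⟩ := h3 k hk
        exact ⟨l, Finset.mem_insert_of_mem hl, hl'⟩
    · have : insert i (A ∪ B) ⊆ insert i A ∪ insert (nn i) B := by
        intro x; simp only [Finset.mem_insert, Finset.mem_union]; tauto
      have := Finset.card_le_card this
      rw [Finset.card_insert_of_notMem (by simpa using hi')] at this
      omega

lemma exists_goodPair {α : Type*} [Fintype α] [DecidableEq α] [Nontrivial α]
    (w : α → α → ℝ) (hw : ∀ i j, w i j = w j i) :
    ∃ A B, GoodPair w A B ∧ A ∪ B = Finset.univ := by
  obtain ⟨A, B, h, hc⟩ := exists_goodPair_card w hw _ le_rfl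
  exact ⟨A, B, h, (Finset.card_eq_iff_eq_univ _).1 (le_antisymm (Finset.card_le_univ _) hc)⟩

lemma GoodPair.leaf {α : Type*} [DecidableEq α] {w : α → α → ℝ} {A B : Finset α}
    (h : GoodPair w A B) (hc : A.card < B.card) : ∃ b ∈ B, GoodPair w A (B.erase b) := by
  obtain ⟨h1, h2, h3⟩ := h
  choose F hF hF' using h2
  have : (A.attach.image (fun i => F i.1 i.2)).card < B.card :=
    lt_of_le_of_lt (Finset.card_image_le.trans (by simp)) hc
  obtain ⟨b, hb, hb'⟩ := Finset.exists_mem_notMem_of_card_lt_card this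
  refine ⟨b, hb, h1.mono_right (Finset.erase_subset _ _), fun i hi => ⟨F i hi, ?_, hF' i hi⟩,
    fun i hi => h3 i (Finset.mem_of_mem_erase hi)⟩
  rw [Finset.mem_erase]
  refine ⟨fun h => hb' ?_, hF i hi⟩
  rw [← h]
  exact Finset.mem_image.2 ⟨⟨i, hi⟩, by simp, rfl⟩

lemma exists_leaf {α : Type*} [Fintype α] [DecidableEq α] [Nontrivial α]
    (w : α → α → ℝ) (hw : ∀ i j, w i j = w j i) (ho : Odd (Fintype.card α)) :
    ∃ A B b, GoodPair w A B ∧ b ∉ A ∧ b ∉ B ∧ insert b (A ∪ B) = Finset.univ := by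
  obtain ⟨A, B, h, hu⟩ := exists_goodPair w hw
  have hcard : A.card + B.card = Fintype.card α := by
    rw [← Finset.card_union_of_disjoint h.1, hu, Finset.card_univ]
  rcases lt_trichotomy A.card B.card with hl | he | hl
  · obtain ⟨b, hb, hG⟩ := h.leaf hl
    refine ⟨A, B.erase b, b, hG, Finset.disjoint_right.1 h.1 hb, by simp, ?_⟩
    rw [← Finset.union_insert, Finset.insert_erase hb, hu]
  · rw [← hcard, he] at ho; grind
  · obtain ⟨b, hb, hG⟩ := h.symm.leaf hl
    refine ⟨B, A.erase b, b, hG, Finset.disjoint_left.1 h.1 hb, by simp, ?_⟩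
    rw [← Finset.union_insert, Finset.insert_erase hb, Finset.union_comm, hu]

open scoped ENNReal

lemma ennreal_rpow_neg_anti {x y : ℝ≥0∞} {b : ℝ} (hb : 0 ≤ b) (h : x ≤ y) :
    y ^ (-b) ≤ x ^ (-b) := by
  rw [ENNReal.rpow_neg, ENNReal.rpow_neg, ENNReal.inv_le_inv]
  exact ENNReal.rpow_le_rpow h hb

lemma radial_integral (d : ℕ) (hd : 1 ≤ d) (b : ℝ) (hbd : b < d) (ρ : ℝ) (hρ : 0 < ρ) :
    IntegrableOn (fun x : EuclideanSpace ℝ (Fin d) => ‖x‖ ^ (-b)) (Metric.ball 0 ρ) ∧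
    ∫ x : EuclideanSpace ℝ (Fin d) in Metric.ball 0 ρ, ‖x‖ ^ (-b) =
      d * volume.real (Metric.ball (0 : EuclideanSpace ℝ (Fin d)) 1) * (ρ ^ (d - b) / (d - b)) := by
  have hf : Module.finrank ℝ (EuclideanSpace ℝ (Fin d)) = d := by simp
  have : Nontrivial (EuclideanSpace ℝ (Fin d)) := by
    apply Module.nontrivial_of_finrank_pos (R := ℝ); omega
  constructor
  · apply integrableOn_ball_of_norm_le_rpow (C := 1) (α := b) (by omega) (by rw [hf]; exact hbd)
    · filter_upwards with x
      rw [one_mul, Real.norm_of_nonneg (by positivity)]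
    · exact (measurable_norm.pow_const _).aestronglyMeasurable
  · have h1 := integral_fun_norm_addHaar (volume : Measure (EuclideanSpace ℝ (Fin d)))
      ((Set.Iio ρ).indicator (fun y : ℝ => y ^ (-b)))
    have h2 : (fun x : EuclideanSpace ℝ (Fin d) => (Set.Iio ρ).indicator (fun y : ℝ => y ^ (-b)) ‖x‖)
        = (Metric.ball 0 ρ).indicator (fun x => ‖x‖ ^ (-b)) := by
      ext x; simp [Set.indicator]
    rw [h2, integral_indicator measurableSet_ball] at h1
    rw [h1, hf, nsmul_eq_mul, smul_eq_mul, mul_assoc]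
    congr 2
    have h3 : ∫ y in Set.Ioi (0:ℝ), y ^ (d - 1) • (Set.Iio ρ).indicator (fun y : ℝ => y ^ (-b)) y
        = ∫ y in Set.Ioi (0:ℝ), (Set.Iio ρ).indicator (fun y : ℝ => y ^ ((d:ℝ) - 1 - b)) y := by
      apply setIntegral_congr_fun measurableSet_Ioi
      intro y hy
      simp only [Set.indicator, smul_eq_mul]
      split_ifs
      · have hy : 0 < y := hy
        rw [← Real.rpow_natCast, ← Real.rpow_add hy]
        congr 1
        push_cast [hd]; ring
      · simp
    rw [h3, setIntegral_indicator measurableSet_Iio, Set.Ioi_inter_Iio, ← integral_Ioc_eq_integral_Ioo,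
      ← intervalIntegral.integral_of_le hρ.le, integral_rpow (Or.inl (by linarith)),
      Real.zero_rpow (by linarith)]
    congr 1 <;> ring_nf

lemma radial_lintegral (d : ℕ) (hd : 1 ≤ d) (b : ℝ) (hbd : b < d) (ρ : ℝ) (hρ : 0 < ρ)
    (y : EuclideanSpace ℝ (Fin d)) :
    ∫⁻ x in Metric.ball y ρ, (edist x y) ^ (-b) = ENNReal.ofReal
      (d * volume.real (Metric.ball (0 : EuclideanSpace ℝ (Fin d)) 1) * (ρ ^ (d - b) / (d - b))) := by
  have : Nontrivial (EuclideanSpace ℝ (Fin d)) := by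
    apply Module.nontrivial_of_finrank_pos (R := ℝ); simp; omega
  obtain ⟨hi, he⟩ := radial_integral d hd b hbd ρ hρ
  rw [← he, ofReal_integral_eq_lintegral_ofReal hi (by filter_upwards with x; positivity)]
  rw [← lintegral_indicator measurableSet_ball, ← lintegral_indicator measurableSet_ball,
    ← lintegral_sub_right_eq_self (Set.indicator (Metric.ball 0 ρ) _) y]
  apply lintegral_congr_ae
  have : ∀ᵐ x : EuclideanSpace ℝ (Fin d), x ≠ y := by
    simp [ae_iff]
  filter_upwards [this] with x hx
  have hx' : 0 < ‖x - y‖ := by rw [norm_pos_iff, sub_ne_zero]; exact hx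
  simp only [Set.indicator, Metric.mem_ball, dist_eq_norm, sub_zero]
  split_ifs
  · rw [edist_dist, dist_eq_norm, ENNReal.ofReal_rpow_of_pos hx']
  · rfl

/-- one particle estimate -/
lemma one_particle (d : ℕ) (hd : 1 ≤ d) (b : ℝ) (hb : 0 ≤ b) (hbd : b < d) {α : Type*}
    (T : Finset α) (z : α → EuclideanSpace ℝ (Fin d)) (N : ℕ) (hN : 1 ≤ N) (hT : T.card ≤ N) :
    ∫⁻ x in Metric.ball (0 : EuclideanSpace ℝ (Fin d)) 1, (⨅ j ∈ T, edist x (z j)) ^ (-b) ≤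
      ENNReal.ofReal (2 * d * (N : ℝ) ^ (b / d) / (d - b)) *
        volume (Metric.ball (0 : EuclideanSpace ℝ (Fin d)) 1) := by
  have hN0 : (0:ℝ) < N := by exact_mod_cast hN
  have hd0 : (0:ℝ) < d := by exact_mod_cast hd
  have hdb : 0 < d - b := by linarith
  set ρ : ℝ := (N : ℝ) ^ (-(1 / (d:ℝ))) with hρd
  have hρ : 0 < ρ := by positivity
  set V := volume (Metric.ball (0 : EuclideanSpace ℝ (Fin d)) 1) with hV
  have hVt : V ≠ ⊤ := measure_ball_lt_top.ne
  have key : ∀ x : EuclideanSpace ℝ (Fin d), (⨅ j ∈ T, edist x (z j)) ^ (-b) ≤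
      (ENNReal.ofReal ρ) ^ (-b) +
        ∑ j ∈ T, (Metric.ball (z j) ρ).indicator (fun x => (edist x (z j)) ^ (-b)) x := by
    intro x
    by_cases h : ∃ j ∈ T, edist x (z j) < ENNReal.ofReal ρ
    · have hTn : T.Nonempty := by obtain ⟨j, hj, _⟩ := h; exact ⟨j, hj⟩
      obtain ⟨j, hj, hm⟩ := Finset.exists_min_image T (fun j => edist x (z j)) hTn
      have hlt : edist x (z j) < ENNReal.ofReal ρ := by
        obtain ⟨k, hk, hk'⟩ := h
        exact lt_of_le_of_lt (hm k hk) hk'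
      have hmem : x ∈ Metric.ball (z j) ρ := by
        rw [edist_dist, ENNReal.ofReal_lt_ofReal_iff hρ] at hlt; exact hlt
      calc (⨅ j ∈ T, edist x (z j)) ^ (-b) ≤ (edist x (z j)) ^ (-b) :=
            ennreal_rpow_neg_anti hb (le_iInf₂ hm)
        _ = (Metric.ball (z j) ρ).indicator (fun x => (edist x (z j)) ^ (-b)) x := by
            rw [Set.indicator_of_mem hmem]
        _ ≤ ∑ j ∈ T, (Metric.ball (z j) ρ).indicator (fun x => (edist x (z j)) ^ (-b)) x :=
            Finset.single_le_sum
              (f := fun j => (Metric.ball (z j) ρ).indicator (fun x => (edist x (z j)) ^ (-b)) x)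
              (fun _ _ => zero_le) hj
        _ ≤ _ := le_add_self
    · push Not at h
      exact (ennreal_rpow_neg_anti hb (le_iInf₂ h)).trans le_self_add
  have hmeas : ∀ j, Measurable ((Metric.ball (z j) ρ).indicator (fun x => (edist x (z j)) ^ (-b))) :=
    fun j => Measurable.indicator (by fun_prop) measurableSet_ball
  calc _ ≤ ∫⁻ x in Metric.ball (0 : EuclideanSpace ℝ (Fin d)) 1, ((ENNReal.ofReal ρ) ^ (-b) +
        ∑ j ∈ T, (Metric.ball (z j) ρ).indicator (fun x => (edist x (z j)) ^ (-b)) x) :=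
        lintegral_mono key
    _ = (ENNReal.ofReal ρ) ^ (-b) * V + ∑ j ∈ T, ∫⁻ x in Metric.ball (0 : EuclideanSpace ℝ (Fin d)) 1,
          (Metric.ball (z j) ρ).indicator (fun x => (edist x (z j)) ^ (-b)) x := by
        rw [lintegral_add_left measurable_const, lintegral_const,
          lintegral_finsetSum _ (fun j _ => hmeas j)]
        simp [hV]
    _ ≤ (ENNReal.ofReal ρ) ^ (-b) * V + ∑ j ∈ T, ENNReal.ofReal
          (d * volume.real (Metric.ball (0 : EuclideanSpace ℝ (Fin d)) 1) * (ρ ^ (d - b) / (d - b))) := by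
        gcongr with j hj
        refine (setLIntegral_le_lintegral _ _).trans ?_
        rw [lintegral_indicator measurableSet_ball, radial_lintegral d hd b hbd ρ hρ]
    _ ≤ (ENNReal.ofReal ρ) ^ (-b) * V + N * ENNReal.ofReal
          (d * volume.real (Metric.ball (0 : EuclideanSpace ℝ (Fin d)) 1) * (ρ ^ (d - b) / (d - b))) := by
        rw [Finset.sum_const, nsmul_eq_mul]
        gcongr
    _ = ENNReal.ofReal (ρ ^ (-b)) * V + ENNReal.ofReal (N * (d * (ρ ^ (d - b) / (d - b)))) * V := by
        rw [ENNReal.ofReal_rpow_of_pos hρ]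
        congr 1
        have : V = ENNReal.ofReal (volume.real (Metric.ball (0 : EuclideanSpace ℝ (Fin d)) 1)) := by
          rw [Measure.real, ENNReal.ofReal_toReal hVt]
        rw [this, ← ENNReal.ofReal_natCast N, ← ENNReal.ofReal_mul (by positivity),
          ← ENNReal.ofReal_mul (by positivity)]
        congr 1; ring
    _ = ENNReal.ofReal (ρ ^ (-b) + N * (d * (ρ ^ (d - b) / (d - b)))) * V := by
        rw [ENNReal.ofReal_add (by positivity) (by positivity), add_mul]
    _ ≤ _ := by
        gcongr
        have e1 : ρ ^ (-b) = (N:ℝ) ^ (b / d) := by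
          rw [hρd, ← Real.rpow_mul hN0.le]; congr 1; ring
        have e2 : ρ ^ (d - b) = (N:ℝ) ^ (b / d) * (N:ℝ)⁻¹ := by
          rw [hρd, ← Real.rpow_mul hN0.le, ← Real.rpow_neg_one (N:ℝ), ← Real.rpow_add hN0]
          congr 1; field_simp; ring
        rw [e1, e2, le_div_iff₀ hdb]
        have : ((N:ℝ) ^ (b / d) + N * (d * ((N:ℝ) ^ (b / d) * (N:ℝ)⁻¹ / (d - b)))) * (d - b)
          = (N:ℝ) ^ (b / d) * (d - b) + d * (N:ℝ) ^ (b / d) := by field_simp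
        rw [this]
        have : 0 ≤ (N:ℝ) ^ (b / d) := by positivity
        nlinarith

/-- integrate out one variable -/
lemma integrate_out {ι X : Type*} [Fintype ι] [DecidableEq ι] [MeasurableSpace X] (μ : Measure X)
    [IsFiniteMeasure μ] (i : ι) (K : ℝ≥0∞)
    (f φ : (ι → X) → ℝ≥0∞) (hf : Measurable f) (hφ : Measurable φ)
    (hfi : ∀ z x, f (Function.update z i x) = f z)
    (hK : ∀ z, ∫⁻ x, φ (Function.update z i x) ∂μ ≤ K * μ Set.univ) :
    ∫⁻ z, φ z * f z ∂(Measure.pi fun _ : ι => μ) ≤ K * ∫⁻ z, f z ∂(Measure.pi fun _ : ι => μ) := by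
  rw [← lintegral_const_mul _ hf]
  refine lintegral_le_of_lmarginal_le {i} (hφ.mul hf) (hf.const_mul _) ?_
  rw [lmarginal_singleton, lmarginal_singleton]
  intro z
  simp only [hfi]
  rw [lintegral_const]
  rw [lintegral_mul_const _ (by fun_prop)]
  calc _ ≤ K * μ Set.univ * f z := by gcongr; exact hK z
    _ = _ := by ring

noncomputable def nd {ι X : Type*} [PseudoEMetricSpace X] (z : ι → X) (i : ι) (T : Finset ι) : ℝ≥0∞ :=
  ⨅ j ∈ T, edist (z i) (z j)

lemma measurable_nd {ι : Type*} [Fintype ι] {d : ℕ} (i : ι) (T : Finset ι) :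
    Measurable (fun z : ι → EuclideanSpace ℝ (Fin d) => nd z i T) := by
  unfold nd
  refine Measurable.iInf fun j => Measurable.iInf fun _ => ?_
  fun_prop

lemma measurable_nd_rpow {ι : Type*} [Fintype ι] {d : ℕ} (i : ι) (T : Finset ι) (b : ℝ) :
    Measurable (fun z : ι → EuclideanSpace ℝ (Fin d) => nd z i T ^ b) :=
  (measurable_nd i T).pow_const b

lemma nd_update_of_notMem {ι X : Type*} [DecidableEq ι] [PseudoEMetricSpace X] (z : ι → X) (k : ι) (x : X)
    (i : ι) (T : Finset ι) (hi : i ≠ k) (hk : k ∉ T) :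
    nd (Function.update z k x) i T = nd z i T := by
  unfold nd
  rw [Function.update_of_ne hi]
  refine iInf_congr fun j => iInf_congr fun hj => ?_
  rw [Function.update_of_ne (by rintro rfl; exact hk hj)]

lemma nd_update_self {ι X : Type*} [DecidableEq ι] [PseudoEMetricSpace X] (z : ι → X) (k : ι) (x : X)
    (T : Finset ι) (hk : k ∉ T) :
    nd (Function.update z k x) k T = ⨅ j ∈ T, edist x (z j) := by
  unfold nd
  rw [Function.update_self]
  refine iInf_congr fun j => iInf_congr fun hj => ?_
  rw [Function.update_of_ne (by rintro rfl; exact hk hj)]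

lemma prod_bound (d : ℕ) (hd : 1 ≤ d) (b : ℝ) (hb : 0 ≤ b) (hbd : b < d) (N : ℕ) (hN : 1 ≤ N)
    (A T : Finset (Fin N)) (hAT : Disjoint A T) :
    ∫⁻ z, ∏ i ∈ A, nd z i T ^ (-b) ∂(Measure.pi fun _ : Fin N =>
        volume.restrict (Metric.ball (0 : EuclideanSpace ℝ (Fin d)) 1)) ≤
      ENNReal.ofReal (2 * d * (N : ℝ) ^ (b / d) / (d - b)) ^ A.card *
        volume (Metric.ball (0 : EuclideanSpace ℝ (Fin d)) 1) ^ N := by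
  induction A using Finset.induction with
  | empty => simp [Measure.pi_univ]
  | insert i A hi ih =>
    rw [Finset.disjoint_insert_left] at hAT
    simp only [Finset.prod_insert hi]
    rw [Finset.card_insert_of_notMem hi, pow_succ', mul_assoc]
    have : Fact (volume (Metric.ball (0 : EuclideanSpace ℝ (Fin d)) 1) < ⊤) := ⟨measure_ball_lt_top⟩
    refine (integrate_out _ i (ENNReal.ofReal (2 * d * (N : ℝ) ^ (b / d) / (d - b)))
      (fun z => ∏ i ∈ A, nd z i T ^ (-b)) (fun z => nd z i T ^ (-b)) ?_ ?_ ?_ ?_).trans ?_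
    · exact Finset.measurable_prod _ fun i _ => measurable_nd_rpow i T _
    · exact measurable_nd_rpow i T _
    · intro z x
      refine Finset.prod_congr rfl fun k hk => ?_
      rw [nd_update_of_notMem z i x k T (by rintro rfl; exact hi hk) hAT.1]
    · intro z
      simp only [nd_update_self z i _ T hAT.1]
      rw [Measure.restrict_apply_univ]
      exact one_particle d hd b hb hbd T z N hN (by simpa using Finset.card_le_univ T)
    · gcongr
      exact ih hAT.2

lemma pair_bound (d : ℕ) (hd : 1 ≤ d) (a : ℝ) (ha : 0 ≤ a) (had : 2 * a < d) (N : ℕ) (hN : 1 ≤ N)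
    (A B : Finset (Fin N)) (hAB : Disjoint A B) (m : ℕ) (hm : A.card + B.card = 2 * m) :
    ∫⁻ z, (∏ i ∈ A, nd z i B ^ (-a)) * (∏ i ∈ B, nd z i A ^ (-a)) ∂(Measure.pi fun _ : Fin N =>
        volume.restrict (Metric.ball (0 : EuclideanSpace ℝ (Fin d)) 1)) ≤
      ENNReal.ofReal (2 * d * (N : ℝ) ^ (2 * a / d) / (d - 2 * a)) ^ m *
        volume (Metric.ball (0 : EuclideanSpace ℝ (Fin d)) 1) ^ N := by
  set K := ENNReal.ofReal (2 * d * (N : ℝ) ^ (2 * a / d) / (d - 2 * a))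
  set V := volume (Metric.ball (0 : EuclideanSpace ℝ (Fin d)) 1)
  have hsq : ∀ (S T : Finset (Fin N)) (z : Fin N → EuclideanSpace ℝ (Fin d)),
      (∏ i ∈ S, nd z i T ^ (-a)) ^ (2:ℝ) = ∏ i ∈ S, nd z i T ^ (-(2 * a)) := by
    intro S T z
    rw [← ENNReal.prod_rpow_of_nonneg (by norm_num)]
    refine Finset.prod_congr rfl fun i _ => ?_
    rw [← ENNReal.rpow_mul]; congr 1; ring
  have hmeas : ∀ (S T : Finset (Fin N)), Measurable
      (fun z : Fin N → EuclideanSpace ℝ (Fin d) => ∏ i ∈ S, nd z i T ^ (-a)) :=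
    fun S T => Finset.measurable_prod _ fun i _ => measurable_nd_rpow i T _
  have hconj : (2:ℝ).HolderConjugate 2 := Real.HolderConjugate.two_two
  refine (ENNReal.lintegral_mul_le_Lp_mul_Lq _ hconj (hmeas A B).aemeasurable
    (hmeas B A).aemeasurable).trans ?_
  simp only [hsq]
  have h1 := prod_bound d hd (2 * a) (by linarith) had N hN A B hAB
  have h2 := prod_bound d hd (2 * a) (by linarith) had N hN B A hAB.symm
  calc _ ≤ (K ^ A.card * V ^ N) ^ (1 / (2:ℝ)) * (K ^ B.card * V ^ N) ^ (1 / (2:ℝ)) := by gcongr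
    _ = ((K ^ m * V ^ N) ^ (2:ℝ)) ^ (1 / (2:ℝ)) := by
      rw [← ENNReal.mul_rpow_of_nonneg _ _ (by norm_num)]
      congr 1
      rw [ENNReal.rpow_two]
      calc _ = K ^ (A.card + B.card) * V ^ N * V ^ N := by rw [pow_add]; ring
        _ = _ := by rw [hm]; ring
    _ = _ := by rw [← ENNReal.rpow_mul]; norm_num

lemma iInf_eq_of_isNN {N d : ℕ} (z : Fin N → EuclideanSpace ℝ (Fin d)) (i j : Fin N)
    (h : IsNN (fun i j => dist (z i) (z j)) i j) :
    (⨅ j : {j : Fin N // j ≠ i}, dist (z i) (z j.1)) = dist (z i) (z j) := by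
  have : Nonempty {j : Fin N // j ≠ i} := ⟨⟨j, h.1⟩⟩
  apply le_antisymm
  · exact ciInf_le (Set.finite_range _).bddBelow (⟨j, h.1⟩ : {j : Fin N // j ≠ i})
  · exact le_ciInf fun k => h.2 k.1 k.2

lemma factor_le {N d : ℕ} (z : Fin N → EuclideanSpace ℝ (Fin d)) (i j : Fin N) (T : Finset (Fin N))
    (h : IsNN (fun i j => dist (z i) (z j)) i j) (hj : j ∈ T) (a : ℝ) (ha : 0 < a) :
    ENNReal.ofReal ((⨅ j : {j : Fin N // j ≠ i}, dist (z i) (z j.1)) ^ (-a)) ≤ nd z i T ^ (-a) := by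
  rw [iInf_eq_of_isNN z i j h]
  have h1 : nd z i T ≤ edist (z i) (z j) := iInf₂_le j hj
  refine le_trans ?_ (ennreal_rpow_neg_anti ha.le h1)
  rcases (dist_nonneg (x := z i) (y := z j)).eq_or_lt with h0 | h0
  · rw [← h0, Real.zero_rpow (by linarith)]; simp
  · rw [edist_dist, ENNReal.ofReal_rpow_of_pos h0]

lemma pair_factor_le {N d : ℕ} (z : Fin N → EuclideanSpace ℝ (Fin d)) (A B : Finset (Fin N))
    (h : GoodPair (fun i j => dist (z i) (z j)) A B) (a : ℝ) (ha : 0 < a) :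
    ∏ i ∈ A ∪ B, ENNReal.ofReal ((⨅ j : {j : Fin N // j ≠ i}, dist (z i) (z j.1)) ^ (-a)) ≤
      (∏ i ∈ A, nd z i B ^ (-a)) * (∏ i ∈ B, nd z i A ^ (-a)) := by
  rw [Finset.prod_union h.1]
  refine mul_le_mul' (Finset.prod_le_prod' fun i hi => ?_) (Finset.prod_le_prod' fun i hi => ?_)
  · obtain ⟨j, hj, hn⟩ := h.2.1 i hi
    exact factor_le z i j B hn hj a ha
  · obtain ⟨j, hj, hn⟩ := h.2.2 i hi
    exact factor_le z i j A hn hj a ha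

lemma even_bound (d : ℕ) (hd : 1 ≤ d) (a : ℝ) (ha : 0 < a) (had : 2 * a < d) (N : ℕ) (hN : 2 ≤ N)
    (m : ℕ) (hm : N = 2 * m) :
    ∫⁻ z, ∏ i, ENNReal.ofReal ((⨅ j : {j : Fin N // j ≠ i}, dist (z i) (z j.1)) ^ (-a))
      ∂(Measure.pi fun _ : Fin N =>
        volume.restrict (Metric.ball (0 : EuclideanSpace ℝ (Fin d)) 1)) ≤
      2 ^ N * (ENNReal.ofReal (2 * d * (N : ℝ) ^ (2 * a / d) / (d - 2 * a)) ^ m *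
        volume (Metric.ball (0 : EuclideanSpace ℝ (Fin d)) 1) ^ N) := by
  have : Nontrivial (Fin N) := Fin.nontrivial_iff_two_le.2 hN
  have hmeas : ∀ (S T : Finset (Fin N)), Measurable
      (fun z : Fin N → EuclideanSpace ℝ (Fin d) => ∏ i ∈ S, nd z i T ^ (-a)) :=
    fun S T => Finset.measurable_prod _ fun i _ => measurable_nd_rpow i T _
  calc _ ≤ ∫⁻ z, ∑ A : Finset (Fin N), (∏ i ∈ A, nd z i Aᶜ ^ (-a)) * (∏ i ∈ Aᶜ, nd z i A ^ (-a))
      ∂(Measure.pi fun _ : Fin N =>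
        volume.restrict (Metric.ball (0 : EuclideanSpace ℝ (Fin d)) 1)) := by
        refine lintegral_mono fun z => ?_
        obtain ⟨A, B, hG, hu⟩ := exists_goodPair (fun i j => dist (z i) (z j))
          (fun i j => dist_comm _ _)
        have hB : B = Aᶜ := by
          rw [eq_compl_iff_isCompl]
          exact ⟨hG.1.symm, by rw [codisjoint_iff, Finset.sup_eq_union, Finset.union_comm, hu]; rfl⟩
        have h1 := pair_factor_le z A B hG a ha
        rw [hu] at h1
        subst hB
        exact h1.trans (Finset.single_le_sum (f := fun A : Finset (Fin N) =>
          (∏ i ∈ A, nd z i Aᶜ ^ (-a)) * (∏ i ∈ Aᶜ, nd z i A ^ (-a))) (fun _ _ => zero_le)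
          (Finset.mem_univ A))
    _ ≤ _ := by
        rw [lintegral_finsetSum _ (fun A _ => by have h1 := hmeas A Aᶜ; have h2 := hmeas Aᶜ A; fun_prop)]
        refine (Finset.sum_le_card_nsmul _ _ _ fun A _ => pair_bound d hd a ha.le had N (by omega) A Aᶜ
          disjoint_compl_right m ?_).trans ?_
        · rw [Finset.card_add_card_compl, Fintype.card_fin, hm]
        · rw [nsmul_eq_mul]; simp

lemma odd_bound (d : ℕ) (hd : 1 ≤ d) (a : ℝ) (ha : 0 < a) (had : 2 * a < d) (N : ℕ) (hN : 2 ≤ N)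
    (m : ℕ) (hm : N = 2 * m + 1) :
    ∫⁻ z, ∏ i, ENNReal.ofReal ((⨅ j : {j : Fin N // j ≠ i}, dist (z i) (z j.1)) ^ (-a))
      ∂(Measure.pi fun _ : Fin N =>
        volume.restrict (Metric.ball (0 : EuclideanSpace ℝ (Fin d)) 1)) ≤
      2 ^ N * N * (ENNReal.ofReal (2 * d * (N : ℝ) ^ (a / d) / (d - a)) *
        (ENNReal.ofReal (2 * d * (N : ℝ) ^ (2 * a / d) / (d - 2 * a)) ^ m *
        volume (Metric.ball (0 : EuclideanSpace ℝ (Fin d)) 1) ^ N)) := by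
  have : Nontrivial (Fin N) := Fin.nontrivial_iff_two_le.2 hN
  have hmeas : ∀ (S T : Finset (Fin N)), Measurable
      (fun z : Fin N → EuclideanSpace ℝ (Fin d) => ∏ i ∈ S, nd z i T ^ (-a)) :=
    fun S T => Finset.measurable_prod _ fun i _ => measurable_nd_rpow i T _
  let f : Finset (Fin N) × Fin N → (Fin N → EuclideanSpace ℝ (Fin d)) → ℝ≥0∞ := fun p z =>
    nd z p.2 (Finset.univ.erase p.2) ^ (-a) *
      ((∏ i ∈ p.1.erase p.2, nd z i (insert p.2 p.1)ᶜ ^ (-a)) *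
        (∏ i ∈ (insert p.2 p.1)ᶜ, nd z i (p.1.erase p.2) ^ (-a)))
  have hfm : ∀ p, Measurable (f p) := fun p =>
    (measurable_nd_rpow _ _ _).mul ((hmeas _ _).mul (hmeas _ _))
  calc _ ≤ ∫⁻ z, ∑ p, f p z
      ∂(Measure.pi fun _ : Fin N =>
        volume.restrict (Metric.ball (0 : EuclideanSpace ℝ (Fin d)) 1)) := by
        refine lintegral_mono fun z => ?_
        obtain ⟨A, B, b, hG, hbA, hbB, hu⟩ := exists_leaf (fun i j => dist (z i) (z j))
          (fun i j => dist_comm _ _) (by rw [Fintype.card_fin, hm]; exact odd_two_mul_add_one m)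
        have hB : B = (insert b A)ᶜ := by
          ext x
          have := Finset.mem_univ x
          rw [← hu] at this
          have h2 := fun hx : x ∈ A => Finset.disjoint_left.1 hG.1 hx
          simp only [Finset.mem_insert, Finset.mem_union, Finset.mem_compl] at this ⊢
          constructor
          · intro hx; rintro (rfl | h)
            · exact hbB hx
            · exact h2 h hx
          · tauto
        have h1 := pair_factor_le z A B hG a ha
        refine le_trans ?_ (Finset.single_le_sum (f := fun p => f p z) (fun _ _ => zero_le)
          (Finset.mem_univ (A, b)))
        simp only [f]
        rw [Finset.erase_eq_of_notMem hbA, ← hB, ← hu, Finset.prod_insert (by simp [hbA, hbB])]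
        refine mul_le_mul' ?_ h1
        obtain ⟨j, hj⟩ := exists_isNN (fun i j => dist (z i) (z j)) b
        exact factor_le z b j _ hj (by rw [hu]; simp [hj.1]) a ha
    _ ≤ _ := by
        rw [lintegral_finsetSum _ fun p _ => hfm p]
        refine (Finset.sum_le_card_nsmul _ _ (ENNReal.ofReal (2 * d * (N : ℝ) ^ (a / d) / (d - a)) *
          (ENNReal.ofReal (2 * d * (N : ℝ) ^ (2 * a / d) / (d - 2 * a)) ^ m *
          volume (Metric.ball (0 : EuclideanSpace ℝ (Fin d)) 1) ^ N)) fun p _ => ?_).trans_eq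
          (by rw [nsmul_eq_mul]; simp)
        obtain ⟨A, b⟩ := p
        have hdis : Disjoint (A.erase b) (insert b A)ᶜ := by
          rw [Finset.disjoint_left]; intro x; simp; tauto
        have : Fact (volume (Metric.ball (0 : EuclideanSpace ℝ (Fin d)) 1) < ⊤) := ⟨measure_ball_lt_top⟩
        refine (integrate_out _ b (ENNReal.ofReal (2 * d * (N : ℝ) ^ (a / d) / (d - a)))
          _ _ ((hmeas _ _).mul (hmeas _ _)) (measurable_nd_rpow _ _ _) ?_ ?_).trans ?_
        · intro z x
          simp only [Pi.mul_apply]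
          congr 1
          · refine Finset.prod_congr rfl fun k hk => ?_
            rw [nd_update_of_notMem z b x k _ (Finset.ne_of_mem_erase hk) (by simp)]
          · refine Finset.prod_congr rfl fun k hk => ?_
            rw [nd_update_of_notMem z b x k _ (by rintro rfl; simp at hk) (by simp)]
        · intro z
          simp only [nd_update_self z b _ (Finset.univ.erase b) (by simp)]
          rw [Measure.restrict_apply_univ]
          exact one_particle d hd a ha.le (by linarith) _ z N (by omega)
            (by simp)
        · refine mul_le_mul' le_rfl ?_
          refine pair_bound d hd a ha.le had N (by omega) (A.erase b) (insert b A)ᶜ hdis m ?_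
          have h1 := Finset.card_add_card_compl (insert b A)
          have h2 : (insert b A).card = (A.erase b).card + 1 := by
            rw [← Finset.card_insert_of_notMem (s := A.erase b) (a := b) (by simp)]
            congr 1
            ext x; simp; tauto
          rw [Fintype.card_fin] at h1
          omega

lemma nat_le_two_pow (N : ℕ) : (N : ℝ) ≤ 2 ^ N := by
  exact_mod_cast Nat.lt_two_pow_self.le

/-- **Nearest-neighbour integral bound for imaginary chaos moments.**
There is `C > 0` (depending only on `d`) such that for all `N ≥ 2` and
`β ∈ (0, √d)`,
`∫_{B(0,1)^N} ∏_i (min_{j≠i} |z_i − z_j|)^{−β²/2} dz ≤ C^N (d−β²)^{−⌊N/2⌋} N^{Nβ²/(2d)}`. -/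
theorem stmt_5 (d : ℕ) (hd : 1 ≤ d) :
    ∃ C : ℝ, 0 < C ∧ ∀ N : ℕ, 2 ≤ N → ∀ β : ℝ, 0 < β → β < Real.sqrt d →
      (∫⁻ z : Fin N → EuclideanSpace ℝ (Fin d) in
          Set.univ.pi (fun _ : Fin N => Metric.ball (0 : EuclideanSpace ℝ (Fin d)) 1),
        ENNReal.ofReal (∏ i : Fin N,
          (⨅ j : {j : Fin N // j ≠ i}, dist (z i) (z j.1)) ^ (-(β ^ 2) / 2)))
      ≤ ENNReal.ofReal
          (C ^ N * ((d : ℝ) - β ^ 2) ^ (-((N / 2 : ℕ) : ℝ))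
            * (N : ℝ) ^ ((N : ℝ) * β ^ 2 / (2 * (d : ℝ)))) := by
  have hd1 : (1:ℝ) ≤ d := by exact_mod_cast hd
  have hd0 : (0:ℝ) < d := by linarith
  set V : ℝ := (volume (Metric.ball (0 : EuclideanSpace ℝ (Fin d)) 1)).toReal with hV
  have hV0 : 0 ≤ V := ENNReal.toReal_nonneg
  have hVE : volume (Metric.ball (0 : EuclideanSpace ℝ (Fin d)) 1) = ENNReal.ofReal V :=
    (ENNReal.ofReal_toReal measure_ball_lt_top.ne).symm
  refine ⟨2 * 2 * 4 * (2 * d) * (V + 1), by positivity, fun N hN β hβ hβd => ?_⟩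
  have hβ2 : β ^ 2 < d := by
    rwa [Real.lt_sqrt hβ.le] at hβd
  obtain ⟨a, hadef⟩ : ∃ a : ℝ, a = β ^ 2 / 2 := ⟨_, rfl⟩
  have hβa : β ^ 2 = 2 * a := by linarith
  have ha : 0 < a := by rw [hadef]; positivity
  have had : 2 * a < d := by linarith
  have hN0 : (0:ℝ) < N := by exact_mod_cast (by omega : 0 < N)
  have hN1 : (1:ℝ) ≤ N := by exact_mod_cast (by omega : 1 ≤ N)
  have e1 : -(β ^ 2) / 2 = -a := by rw [hβa]; ring
  rw [volume_pi, Measure.restrict_pi_pi, e1, hβa]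
  have hpr : ∀ z : Fin N → EuclideanSpace ℝ (Fin d), ENNReal.ofReal (∏ i : Fin N,
      (⨅ j : {j : Fin N // j ≠ i}, dist (z i) (z j.1)) ^ (-a)) = ∏ i, ENNReal.ofReal
        ((⨅ j : {j : Fin N // j ≠ i}, dist (z i) (z j.1)) ^ (-a)) := by
    intro z
    apply ENNReal.ofReal_prod_of_nonneg
    intro i _
    exact Real.rpow_nonneg (Real.iInf_nonneg fun j => dist_nonneg) _
  simp only [hpr]
  set δ : ℝ := (d:ℝ) - 2 * a with hδ
  have hδ0 : 0 < δ := by linarith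
  set n : ℝ := (N:ℝ) ^ (a / d) with hn
  have hn0 : 0 < n := by positivity
  have hn2 : (N:ℝ) ^ (2 * a / d) = n ^ 2 := by
    rw [hn, ← Real.rpow_natCast, ← Real.rpow_mul hN0.le]; congr 1; push_cast; ring
  have hnN : (N:ℝ) ^ ((N:ℝ) * (2 * a) / (2 * d)) = n ^ N := by
    rw [hn, ← Real.rpow_natCast, ← Real.rpow_mul hN0.le]; congr 1; field_simp
  have hδm : δ ^ (-((N / 2 : ℕ) : ℝ)) = (δ ^ (N / 2))⁻¹ := by
    rw [Real.rpow_neg hδ0.le, Real.rpow_natCast]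
  rw [hnN, hδm]
  have hVN : V ^ N ≤ (V + 1) ^ N := by gcongr; linarith
  have h2N : (1:ℝ) ≤ 2 ^ N := one_le_pow₀ (by norm_num)
  have h4N : (4:ℝ) ≤ 4 ^ N := by
    calc (4:ℝ) = 4 ^ 1 := by norm_num
      _ ≤ 4 ^ N := pow_le_pow_right₀ (by norm_num) (by omega)
  have hdm : ∀ m ≤ N, (2 * (d:ℝ)) ^ m ≤ (2 * d) ^ N := fun m hm =>
    pow_le_pow_right₀ (by linarith) hm
  rcases Nat.even_or_odd' N with ⟨m, hm | hm⟩
  · refine (even_bound d hd a ha had N hN m hm).trans ?_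
    have hm2 : N / 2 = m := by omega
    rw [hVE, hn2, ← hδ, hm2, ← ENNReal.ofReal_pow (by positivity), ← ENNReal.ofReal_pow hV0,
      ← ENNReal.ofReal_mul (by positivity),
      show (2:ℝ≥0∞) = ENNReal.ofReal 2 by simp, ← ENNReal.ofReal_pow (by positivity),
      ← ENNReal.ofReal_mul (by positivity)]
    apply ENNReal.ofReal_le_ofReal
    calc (2:ℝ) ^ N * ((2 * d * n ^ 2 / δ) ^ m * V ^ N)
        = 2 ^ N * 1 * 1 * (2 * d) ^ m * V ^ N * (δ ^ m)⁻¹ * n ^ N := by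
          have : n ^ N = (n ^ 2) ^ m := by rw [← pow_mul, hm]
          rw [this, div_pow, mul_pow (2 * (d:ℝ))]; field_simp
      _ ≤ 2 ^ N * 2 ^ N * 4 ^ N * (2 * d) ^ N * (V + 1) ^ N * (δ ^ m)⁻¹ * n ^ N := by
          gcongr
          · linarith
          · linarith
          · omega
      _ = _ := by simp only [mul_pow]
  · refine (odd_bound d hd a ha had N hN m hm).trans ?_
    have hm2 : N / 2 = m := by omega
    have hda : 0 < d - a := by linarith
    rw [hVE, hn2, ← hδ, hm2, ← hn, ← ENNReal.ofReal_pow (by positivity), ← ENNReal.ofReal_pow hV0,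
      ← ENNReal.ofReal_mul (by positivity), ← ENNReal.ofReal_mul (by positivity),
      show (2:ℝ≥0∞) = ENNReal.ofReal 2 by simp, ← ENNReal.ofReal_pow (by positivity),
      ← ENNReal.ofReal_natCast N, ← ENNReal.ofReal_mul (by positivity),
      ← ENNReal.ofReal_mul (by positivity)]
    apply ENNReal.ofReal_le_ofReal
    have hKa : 2 * d * n / (d - a) ≤ 4 * n := by
      rw [div_le_iff₀ hda]; nlinarith
    calc (2:ℝ) ^ N * N * (2 * d * n / (d - a) * ((2 * d * n ^ 2 / δ) ^ m * V ^ N))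
        ≤ 2 ^ N * 2 ^ N * (4 * n * ((2 * d * n ^ 2 / δ) ^ m * V ^ N)) := by
          have := nat_le_two_pow N
          gcongr
      _ = 2 ^ N * 2 ^ N * 4 * (2 * d) ^ m * V ^ N * (δ ^ m)⁻¹ * n ^ N := by
          have : n ^ N = (n ^ 2) ^ m * n := by rw [← pow_mul, ← pow_succ, hm]
          rw [this, div_pow, mul_pow (2 * (d:ℝ))]; field_simp
      _ ≤ 2 ^ N * 2 ^ N * 4 ^ N * (2 * d) ^ N * (V + 1) ^ N * (δ ^ m)⁻¹ * n ^ N := by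
          gcongr
          · linarith
          · omega
      _ = _ := by simp only [mul_pow]
end

section
/- Let d ≥ 1. There exists a constant C > 0, depending only on d, such that for every integer N ≥ 2 and every β ∈ (0, √d), ∫_{B(0,1)^N} ∏_{i=1}^N |log min_{j ≠ i} |z_i − z_j||^{1/2} · (min_{j ≠ i} |z_i − z_j|)^{−β²/2} dz_1 … dz_N ≤ C^N (d − β²)^{−2⌊N/2⌋} N^N. -/
open MeasureTheory
open scoped ENNReal

lemma pow_int (d : ℕ) (hd : 1 ≤ d) (γ : ℝ) (hγ : γ < d) (h0 : 0 < γ) :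
    ∫⁻ x : EuclideanSpace ℝ (Fin d), ENNReal.ofReal ((Set.Iio (2:ℝ)).indicator (fun r => r ^ (-γ)) ‖x‖)
      ≤ ENNReal.ofReal ((d * volume.real (Metric.ball (0 : EuclideanSpace ℝ (Fin d)) 1) * 2 ^ d) / (d - γ)) := by
  have : Nonempty (Fin d) := ⟨⟨0, hd⟩⟩
  have hd' : (1:ℝ) ≤ d := by exact_mod_cast hd
  have key : ∀ y ∈ Set.Ioi (0:ℝ), y ^ (d - 1) • (Set.Iio (2:ℝ)).indicator (fun r => r ^ (-γ)) y
      = (Set.Iio (2:ℝ)).indicator (fun r => r ^ ((d:ℝ) - 1 - γ)) y := by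
    intro y hy
    have hy : 0 < y := hy
    by_cases h : y < 2
    · simp only [Set.indicator, Set.mem_Iio, h, if_true, smul_eq_mul]
      rw [← Real.rpow_natCast, ← Real.rpow_add hy, Nat.cast_sub hd]
      congr 1; push_cast; ring
    · simp [Set.indicator, h]
  have hII : IntervalIntegrable (fun r : ℝ => r ^ ((d:ℝ) - 1 - γ)) volume 0 2 :=
    intervalIntegral.intervalIntegrable_rpow' (by linarith)
  have hset : Set.Ioi (0:ℝ) ∩ Set.Iio 2 = Set.Ioo 0 2 := rfl
  have hint : Integrable (fun x : EuclideanSpace ℝ (Fin d) =>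
      (Set.Iio (2:ℝ)).indicator (fun r => r ^ (-γ)) ‖x‖) volume := by
    rw [integrable_fun_norm_addHaar, finrank_euclideanSpace_fin, integrableOn_congr_fun key measurableSet_Ioi]
    rw [IntegrableOn, integrable_indicator_iff measurableSet_Iio, IntegrableOn,
      Measure.restrict_restrict measurableSet_Iio, Set.inter_comm, hset]
    rw [intervalIntegrable_iff_integrableOn_Ioo_of_le (by norm_num)] at hII
    exact hII
  rw [← ofReal_integral_eq_lintegral_ofReal hint]
  · apply ENNReal.ofReal_le_ofReal
    rw [integral_fun_norm_addHaar, finrank_euclideanSpace_fin, setIntegral_congr_fun measurableSet_Ioi key,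
      setIntegral_indicator measurableSet_Iio, hset, ← integral_Ioc_eq_integral_Ioo,
      ← intervalIntegral.integral_of_le (by norm_num), integral_rpow (Or.inl (by linarith))]
    rw [Real.zero_rpow (by linarith), sub_zero, nsmul_eq_mul, smul_eq_mul, mul_div_assoc, mul_assoc]
    have h1 : (2:ℝ) ^ ((d:ℝ) - 1 - γ + 1) ≤ 2 ^ d := by
      rw [← Real.rpow_natCast]
      exact Real.rpow_le_rpow_of_exponent_le (by norm_num) (by linarith)
    have h2 : (d:ℝ) - 1 - γ + 1 = d - γ := by ring
    have h3 : 0 < (d:ℝ) - γ := by linarith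
    rw [h2] at h1 ⊢
    gcongr
  · refine Filter.Eventually.of_forall fun x => ?_
    exact Set.indicator_apply_nonneg (fun _ => Real.rpow_nonneg (norm_nonneg x) _)

lemma graph_bound {ι : Type*} [DecidableEq ι] [Fintype ι] {E L : Type*} [MetricSpace E]
    [MeasurableSpace E] [BorelSpace E] [SecondCountableTopology E] [LinearOrder L]
    (μ : Measure E) [SigmaFinite μ] (F : ι → ι) (ρ : ι → L) (hF : ∀ i, F i ≠ i)
    (hρ : ∀ i, F (F i) = i ∨ ρ (F i) < ρ i) (G : ℝ → ℝ≥0∞) (hG : Measurable G)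
    (M D B : ℝ≥0∞) (hA : ∀ y, ∫⁻ x, G (dist x y) ∂μ ≤ M)
    (hB : ∀ y, ∫⁻ x, G (dist x y) * G (dist x y) ∂μ ≤ B)
    (hBV : B * μ Set.univ ≤ M ^ 2 * D) (hD : 1 ≤ D) :
    ∀ (n : ℕ) (s : Finset ι), s.card = n → (∀ i ∈ s, F i ∈ s) → ∀ z : ι → E,
      lmarginal (fun _ => μ) s (fun z => ∏ i ∈ s, G (dist (z i) (z (F i)))) z
        ≤ M ^ s.card * D ^ (s.card / 2) := by
  have hmeas : ∀ s : Finset ι, Measurable (fun z : ι → E => ∏ i ∈ s, G (dist (z i) (z (F i)))) := by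
    intro s
    refine Finset.measurable_prod _ fun i _ => hG.comp ?_
    exact (measurable_pi_apply i).dist (measurable_pi_apply (F i))
  intro n
  induction n using Nat.strong_induction_on with
  | _ n ih =>
  intro s hs hcl z
  rcases s.eq_empty_or_nonempty with rfl | hne
  · simp
  by_cases hnc : (s.filter (fun i => F (F i) ≠ i)).Nonempty
  · obtain ⟨i, hi, hmax⟩ := Finset.exists_max_image _ ρ hnc
    rw [Finset.mem_filter] at hi
    have hno : ∀ j ∈ s, F j ≠ i := by
      intro j hj hji
      have h1 : F (F j) ≠ j := by
        intro h
        apply hi.2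
        rw [← hji, h]
      have h2 := (hρ j).resolve_left h1
      have h3 := hmax j (Finset.mem_filter.2 ⟨hj, h1⟩)
      rw [hji] at h2
      exact absurd h2 (not_lt.2 h3)
    have hcard : (s.erase i).card + 1 = s.card := Finset.card_erase_add_one hi.1
    have hstep := ih (s.erase i).card (by omega) (s.erase i) rfl (by
      intro j hj
      exact Finset.mem_erase.2 ⟨hno j (Finset.mem_of_mem_erase hj), hcl j (Finset.mem_of_mem_erase hj)⟩) z
    rw [lmarginal_erase' _ (hmeas s) hi.1]
    calc _ ≤ lmarginal (fun _ => μ) (s.erase i)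
            (fun z => M * ∏ j ∈ s.erase i, G (dist (z j) (z (F j)))) z := by
          refine lmarginal_mono (fun x => ?_) z
          have : ∀ y, (∏ j ∈ s, G (dist (Function.update x i y j) (Function.update x i y (F j))))
              = G (dist y (x (F i))) * ∏ j ∈ s.erase i, G (dist (x j) (x (F j))) := by
            intro y
            rw [← Finset.mul_prod_erase s _ hi.1]
            rw [Function.update_self, Function.update_of_ne (hF i)]
            congr 1
            refine Finset.prod_congr rfl fun j hj => ?_
            rw [Function.update_of_ne (Finset.ne_of_mem_erase hj),
              Function.update_of_ne (hno j (Finset.mem_of_mem_erase hj))]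
          simp only [this]
          rw [lintegral_mul_const _ (by fun_prop)]
          gcongr
          exact hA _
      _ = M * lmarginal (fun _ => μ) (s.erase i)
            (fun z => ∏ j ∈ s.erase i, G (dist (z j) (z (F j)))) z := by
          unfold lmarginal
          rw [lintegral_const_mul]
          exact (hmeas _).comp measurable_updateFinset
      _ ≤ M * (M ^ (s.erase i).card * D ^ ((s.erase i).card / 2)) := by gcongr
      _ = M ^ s.card * D ^ ((s.erase i).card / 2) := by rw [← hcard, pow_succ]; ring
      _ ≤ _ := by
          gcongr
          exact Finset.erase_subset i s
  · rw [Finset.not_nonempty_iff_eq_empty, Finset.filter_eq_empty_iff] at hnc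
    have hinv : ∀ j ∈ s, F (F j) = j := fun j hj => not_not.1 (hnc hj)
    obtain ⟨i, hi⟩ := hne
    have hk : F i ∈ s.erase i := Finset.mem_erase.2 ⟨hF i, hcl i hi⟩
    set k := F i with hkdef
    have hFk : F k = i := hinv i hi
    set t := (s.erase i).erase k with ht
    have hcard : t.card + 2 = s.card := by
      have h1 := Finset.card_erase_add_one hi
      have h2 := Finset.card_erase_add_one hk
      rw [← ht] at h2
      omega
    have htm : ∀ j ∈ t, j ≠ k ∧ j ≠ i ∧ j ∈ s := by
      intro j hj; simpa [ht, and_assoc] using hj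
    have hno : ∀ j ∈ t, F j ≠ k ∧ F j ≠ i := by
      intro j hj
      obtain ⟨h1, h2, h3⟩ := htm j hj
      constructor
      · intro h; apply h2; rw [← hinv j h3, h, hFk]
      · intro h; apply h1; rw [← hinv j h3, h]
    have hstep := ih t.card (by omega) t rfl (by
      intro j hj
      have := hno j hj
      simp [ht, this.1, this.2, hcl j (htm j hj).2.2]) z
    rw [lmarginal_erase' _ (hmeas s) hi, lmarginal_erase' _ ?_ hk]
    swap
    · have := (hmeas s).lmarginal (fun _ : ι => μ) (s := {i})
      rwa [lmarginal_singleton] at this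
    calc _ ≤ lmarginal (fun _ => μ) t
            (fun z => (M ^ 2 * D) * ∏ j ∈ t, G (dist (z j) (z (F j)))) z := by
          refine lmarginal_mono (fun x => ?_) z
          have : ∀ w y, (∏ j ∈ s, G (dist (Function.update (Function.update x k w) i y j)
                (Function.update (Function.update x k w) i y (F j))))
              = (G (dist y w) * G (dist y w)) * ∏ j ∈ t, G (dist (x j) (x (F j))) := by
            intro w y
            rw [← Finset.mul_prod_erase s _ hi, ← Finset.mul_prod_erase (s.erase i) _ hk, ← mul_assoc,
              hFk, ← hkdef]
            rw [Function.update_self, Function.update_of_ne (hF i), Function.update_self,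
              dist_comm w y]
            congr 1
            refine Finset.prod_congr rfl fun j hj => ?_
            obtain ⟨h1, h2, h3⟩ := htm j hj
            obtain ⟨h4, h5⟩ := hno j hj
            rw [Function.update_of_ne h2, Function.update_of_ne h1,
              Function.update_of_ne h5, Function.update_of_ne h4]
          simp only [this]
          calc _ ≤ ∫⁻ w, B * ∏ j ∈ t, G (dist (x j) (x (F j))) ∂μ := by
                refine lintegral_mono fun w => ?_
                rw [lintegral_mul_const _ (by fun_prop)]
                gcongr
                exact hB _
            _ = (B * μ Set.univ) * ∏ j ∈ t, G (dist (x j) (x (F j))) := by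
                rw [lintegral_const]; ring
            _ ≤ _ := by gcongr
      _ = (M ^ 2 * D) * lmarginal (fun _ => μ) t
            (fun z => ∏ j ∈ t, G (dist (z j) (z (F j)))) z := by
          unfold lmarginal
          rw [lintegral_const_mul]
          exact (hmeas _).comp measurable_updateFinset
      _ ≤ (M ^ 2 * D) * (M ^ t.card * D ^ (t.card / 2)) := by gcongr
      _ = M ^ s.card * D ^ (s.card / 2) := by
          rw [← hcard, show (t.card + 2) / 2 = t.card / 2 + 1 by omega]; ring

lemma log_bound (d : ℕ) (hd : 1 ≤ d) (ε r : ℝ) (hε : 0 < ε) (hεd : ε ≤ d) (hr : 0 < r) (hr2 : r < 2) :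
    |Real.log r| ≤ d * 2 ^ d / ε * r ^ (-ε) := by
  have hd' : (1:ℝ) ≤ d := by exact_mod_cast hd
  have h2d : (1:ℝ) ≤ 2 ^ d := one_le_pow₀ (by norm_num)
  rcases le_or_gt r 1 with h | h
  · have h1 := (Real.abs_log_mul_self_rpow_lt r ε hr h hε).le
    rw [abs_mul, abs_of_pos (Real.rpow_pos_of_pos hr ε), ← le_div_iff₀ (by positivity)] at h1
    rw [Real.rpow_neg hr.le, ← div_eq_mul_inv]
    refine h1.trans ?_
    gcongr
    nlinarith
  · have h1 : |Real.log r| ≤ 1 := by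
      rw [abs_of_nonneg (Real.log_nonneg h.le)]
      linarith [Real.log_le_sub_one_of_pos hr]
    have h3 : r ^ ε ≤ 2 ^ d := by
      rw [← Real.rpow_natCast]
      calc r ^ ε ≤ 2 ^ ε := Real.rpow_le_rpow hr.le hr2.le hε.le
        _ ≤ _ := Real.rpow_le_rpow_of_exponent_le (by norm_num) hεd
    refine h1.trans ?_
    rw [Real.rpow_neg hr.le, ← div_eq_mul_inv, le_div_iff₀ (by positivity), le_div_iff₀ hε]
    nlinarith

lemma g_bound (d : ℕ) (hd : 1 ≤ d) (α r : ℝ) (hα : 0 < α) (hαd : α < d) (hr : 0 < r) (hr2 : r < 2) :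
    |Real.log r| ^ ((1:ℝ)/2) * r ^ (-α/2) ≤ 2 ^ (d+1) * 2 ^ d * r ^ (-(3 * d / 4 : ℝ)) := by
  have hd' : (1:ℝ) ≤ d := by exact_mod_cast hd
  have h1 := log_bound d hd (d/2) r (by positivity) (by linarith) hr hr2
  have h2 : (d:ℝ) * 2 ^ d / (d/2) = 2 ^ (d+1) := by field_simp; ring
  rw [h2] at h1
  have h3 : |Real.log r| ^ ((1:ℝ)/2) ≤ 2 ^ (d+1) * r ^ (-(d/4:ℝ)) := by
    calc _ ≤ (2 ^ (d+1) * r ^ (-(d/2:ℝ))) ^ ((1:ℝ)/2) := Real.rpow_le_rpow (abs_nonneg _) h1 (by norm_num)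
      _ = (2 ^ (d+1)) ^ ((1:ℝ)/2) * r ^ (-(d/4:ℝ)) := by
        rw [Real.mul_rpow (by positivity) (by positivity), ← Real.rpow_mul hr.le]
        congr 2; ring
      _ ≤ _ := by
        gcongr
        conv_rhs => rw [← Real.rpow_one ((2:ℝ) ^ (d+1))]
        exact Real.rpow_le_rpow_of_exponent_le (one_le_pow₀ (by norm_num)) (by norm_num)
  have h4 : r ^ (-α/2) ≤ 2 ^ d * r ^ (-(d/2:ℝ)) := by
    have : r ^ (-α/2) = r ^ ((d-α)/2) * r ^ (-(d/2:ℝ)) := by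
      rw [← Real.rpow_add hr]; congr 1; ring
    rw [this]
    gcongr
    rw [← Real.rpow_natCast]
    calc r ^ ((d-α)/2) ≤ 2 ^ ((d-α)/2) := Real.rpow_le_rpow hr.le hr2.le (by linarith)
      _ ≤ _ := Real.rpow_le_rpow_of_exponent_le (by norm_num) (by linarith)
  calc _ ≤ (2 ^ (d+1) * r ^ (-(d/4:ℝ))) * (2 ^ d * r ^ (-(d/2:ℝ))) := by gcongr
    _ = 2 ^ (d+1) * 2 ^ d * (r ^ (-(d/4:ℝ)) * r ^ (-(d/2:ℝ))) := by ring
    _ = _ := by rw [← Real.rpow_add hr]; congr 2; ring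

lemma g_sq_bound (d : ℕ) (hd : 1 ≤ d) (α r : ℝ) (hα : 0 < α) (hαd : α < d) (hr : 0 < r) (hr2 : r < 2) :
    (|Real.log r| ^ ((1:ℝ)/2) * r ^ (-α/2)) * (|Real.log r| ^ ((1:ℝ)/2) * r ^ (-α/2))
      ≤ 2 * d * 2 ^ d / (d - α) * r ^ (-((d + α)/2)) := by
  have h1 := log_bound d hd ((d-α)/2) r (by linarith) (by linarith) hr hr2
  have h0 : 0 < (d:ℝ) - α := by linarith
  have h2 : |Real.log r| ^ ((1:ℝ)/2) * |Real.log r| ^ ((1:ℝ)/2) = |Real.log r| := by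
    rw [← Real.sqrt_eq_rpow, Real.mul_self_sqrt (abs_nonneg _)]
  calc _ = (|Real.log r| ^ ((1:ℝ)/2) * |Real.log r| ^ ((1:ℝ)/2)) * (r ^ (-α/2) * r ^ (-α/2)) := by ring
    _ = |Real.log r| * r ^ (-α) := by rw [h2, ← Real.rpow_add hr]; congr 2; ring
    _ ≤ (d * 2 ^ d / ((d-α)/2) * r ^ (-((d-α)/2))) * r ^ (-α) := by gcongr
    _ = (d * 2 ^ d / ((d-α)/2)) * (r ^ (-((d-α)/2)) * r ^ (-α)) := by ring
    _ = _ := by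
      rw [← Real.rpow_add hr]
      congr 1
      · field_simp
      · congr 1; ring

lemma nn_exists {N : ℕ} (hN : 2 ≤ N) {E : Type*} [MetricSpace E] (z : Fin N → E) :
    ∃ F : Fin N → Fin N, (∀ i, F i ≠ i) ∧
      (∃ ρ : Fin N → ℝ ×ₗ (Fin N ×ₗ Fin N), ∀ i, F (F i) = i ∨ ρ (F i) < ρ i) ∧
      ∀ i, (⨅ j : {j : Fin N // j ≠ i}, dist (z i) (z j.1)) = dist (z i) (z (F i)) := by
  let κ : Fin N → Fin N → ℝ ×ₗ (Fin N ×ₗ Fin N) := fun i j =>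
    toLex (dist (z i) (z j), toLex (min i j, max i j))
  have hκ : ∀ i j, κ i j = κ j i := by
    intro i j; simp only [κ, dist_comm, min_comm, max_comm]
  have hne : ∀ i : Fin N, (Finset.univ.erase i).Nonempty := by
    intro i
    rw [← Finset.card_pos, Finset.card_erase_of_mem (Finset.mem_univ _), Finset.card_fin]
    omega
  have : ∀ i, ∃ j, j ≠ i ∧ ∀ k, k ≠ i → κ i j ≤ κ i k := by
    intro i
    obtain ⟨j, hj, h⟩ := Finset.exists_min_image _ (κ i) (hne i)
    exact ⟨j, Finset.ne_of_mem_erase hj, fun k hk => h k (by simp [hk])⟩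
  choose F hF hmin using this
  refine ⟨F, hF, ⟨fun i => κ i (F i), fun i => ?_⟩, fun i => ?_⟩
  · have h1 : κ (F i) (F (F i)) ≤ κ i (F i) := by
      rw [hκ i]
      exact hmin (F i) i (hF i).symm
    rcases h1.lt_or_eq with h | h
    · exact Or.inr h
    · left
      have h2 := congrArg (fun p => (ofLex (ofLex p).2)) h
      simp only [κ, ofLex_toLex, Prod.mk.injEq] at h2
      obtain ⟨h3, h4⟩ := h2
      have := hF i
      have := hF (F i)
      grind
  · apply le_antisymm
    · exact ciInf_le ⟨0, by rintro _ ⟨j, rfl⟩; exact dist_nonneg⟩ (⟨F i, hF i⟩ : {j : Fin N // j ≠ i})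
    · have : Nonempty {j : Fin N // j ≠ i} := ⟨⟨F i, hF i⟩⟩
      refine le_ciInf fun j => ?_
      have h := hmin i j.1 j.2
      rw [Prod.Lex.le_iff] at h
      rcases h with h | h
      · exact h.le
      · exact h.1.le

lemma kernel_bound (d : ℕ) (hd : 1 ≤ d) (μ : Measure (EuclideanSpace ℝ (Fin d))) (hμ : μ ≤ volume)
    (H : ℝ → ℝ≥0∞) (c γ : ℝ) (hc : 0 ≤ c) (hγ0 : 0 < γ) (hγ : γ < d)
    (hH : ∀ r, 0 ≤ r → H r ≤ ENNReal.ofReal (c * (Set.Iio (2:ℝ)).indicator (fun r => r ^ (-γ)) r))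
    (y : EuclideanSpace ℝ (Fin d)) :
    ∫⁻ x, H (dist x y) ∂μ ≤ ENNReal.ofReal (c * ((d * volume.real (Metric.ball (0 : EuclideanSpace ℝ (Fin d)) 1) * 2 ^ d) / (d - γ))) := by
  calc _ ≤ ∫⁻ x, H (dist x y) := lintegral_mono' hμ le_rfl
    _ ≤ ∫⁻ x, ENNReal.ofReal (c * (Set.Iio (2:ℝ)).indicator (fun r => r ^ (-γ)) ‖x - y‖) := by
        refine lintegral_mono fun x => ?_
        rw [dist_eq_norm]
        exact hH _ (norm_nonneg _)
    _ = ∫⁻ x : EuclideanSpace ℝ (Fin d), ENNReal.ofReal (c * (Set.Iio (2:ℝ)).indicator (fun r => r ^ (-γ)) ‖x‖) :=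
        lintegral_sub_right_eq_self (fun x : EuclideanSpace ℝ (Fin d) => ENNReal.ofReal (c * (Set.Iio (2:ℝ)).indicator (fun r => r ^ (-γ)) ‖x‖)) y
    _ = ENNReal.ofReal c * ∫⁻ x : EuclideanSpace ℝ (Fin d), ENNReal.ofReal ((Set.Iio (2:ℝ)).indicator (fun r => r ^ (-γ)) ‖x‖) := by
        simp_rw [ENNReal.ofReal_mul hc]
        rw [lintegral_const_mul' _ _ ENNReal.ofReal_ne_top]
    _ ≤ _ := by
        rw [ENNReal.ofReal_mul hc]
        gcongr
        exact pow_int d hd γ hγ hγ0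

set_option maxHeartbeats 1000000 in
/-- **Nearest-neighbour integral bound with square-root logarithmic factors.**
There is `C > 0` (depending only on `d`) such that for all `N ≥ 2` and
`β ∈ (0, √d)`,
`∫_{B(0,1)^N} ∏_i |log min_{j≠i}|z_i−z_j||^{1/2} (min_{j≠i}|z_i−z_j|)^{−β²/2} dz
  ≤ C^N (d−β²)^{−2⌊N/2⌋} N^N`. -/
theorem stmt_6 (d : ℕ) (hd : 1 ≤ d) :
    ∃ C : ℝ, 0 < C ∧ ∀ N : ℕ, 2 ≤ N → ∀ β : ℝ, 0 < β → β < Real.sqrt d →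
      (∫⁻ z : Fin N → EuclideanSpace ℝ (Fin d) in
          Set.univ.pi (fun _ : Fin N => Metric.ball (0 : EuclideanSpace ℝ (Fin d)) 1),
        ENNReal.ofReal (∏ i : Fin N,
          |Real.log (⨅ j : {j : Fin N // j ≠ i}, dist (z i) (z j.1))| ^ ((1 : ℝ) / 2)
            * (⨅ j : {j : Fin N // j ≠ i}, dist (z i) (z j.1)) ^ (-(β ^ 2) / 2)))
      ≤ ENNReal.ofReal
          (C ^ N * ((d : ℝ) - β ^ 2) ^ (-(2 * ((N / 2 : ℕ) : ℝ)))
            * (N : ℝ) ^ N) := by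
  classical
  have hd' : (1:ℝ) ≤ d := by exact_mod_cast hd
  set v : ℝ := volume.real (Metric.ball (0 : EuclideanSpace ℝ (Fin d)) 1) with hv
  have hv0 : 0 ≤ v := measureReal_nonneg
  set P : ℝ := d * v * 2 ^ d with hP
  have hP0 : 0 ≤ P := by positivity
  set a : ℝ := 2 ^ (d+1) * 2 ^ d * (P / (d - 3 * d / 4)) with ha
  have ha0 : 0 ≤ a := by
    have : (0:ℝ) < d - 3 * d / 4 := by linarith
    positivity
  set b : ℝ := 4 * d * 2 ^ d * P * v with hb
  have hb0 : 0 ≤ b := by positivity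
  set M : ℝ := 1 + a + b with hM
  have hM1 : 1 ≤ M := by linarith
  refine ⟨M * d, by positivity, ?_⟩
  intro N hN β hβ0 hβ
  set α : ℝ := β ^ 2 with hα
  have hα0 : 0 < α := by positivity
  have hαd : α < d := by
    have := Real.lt_sqrt hβ0.le |>.1 hβ
    exact this
  have hdα : 0 < (d:ℝ) - α := by linarith
  set D : ℝ := d ^ 2 / (d - α) ^ 2 with hD
  have hD1 : 1 ≤ D := by
    rw [hD, one_le_div (by positivity)]
    exact pow_le_pow_left₀ hdα.le (by linarith) 2
  let G : ℝ → ℝ≥0∞ := fun r => (Set.Iio (2:ℝ)).indicator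
    (fun r => ENNReal.ofReal (|Real.log r| ^ ((1:ℝ)/2) * r ^ (-α/2))) r
  have hGm : Measurable G := by
    refine Measurable.indicator ?_ measurableSet_Iio
    refine ENNReal.measurable_ofReal.comp ?_
    refine Measurable.mul ?_ (measurable_id.pow_const _)
    exact (Real.measurable_log.abs).pow_const _
  set μ : Measure (EuclideanSpace ℝ (Fin d)) := volume.restrict (Metric.ball 0 1) with hμ
  have hμle : μ ≤ volume := Measure.restrict_le_self
  have hz : |Real.log 0| ^ ((1:ℝ)/2) = 0 := by
    rw [Real.log_zero, abs_zero, Real.zero_rpow (by norm_num)]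
  have hA : ∀ y, ∫⁻ x, G (dist x y) ∂μ ≤ ENNReal.ofReal M := by
    intro y
    refine (kernel_bound d hd μ hμle G (2 ^ (d+1) * 2 ^ d) (3 * d / 4) (by positivity)
      (by positivity) (by linarith) ?_ y).trans (ENNReal.ofReal_le_ofReal ?_)
    · intro r hr
      by_cases h : r < 2
      · simp only [G, Set.indicator, Set.mem_Iio, h, if_true]
        apply ENNReal.ofReal_le_ofReal
        rcases hr.eq_or_lt with h0 | h0
        · rw [← h0, hz, zero_mul]; positivity
        · exact g_bound d hd α r hα0 hαd h0 h
      · simp [G, Set.indicator, h]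
    · change a ≤ M
      linarith
  set B : ℝ := 2 * d * 2 ^ d / (d - α) * (P / (d - (d + α) / 2)) with hB
  have hB0 : 0 ≤ B := by
    have : (0:ℝ) < d - (d + α) / 2 := by linarith
    positivity
  have hBB : ∀ y, ∫⁻ x, G (dist x y) * G (dist x y) ∂μ ≤ ENNReal.ofReal B := by
    intro y
    refine (kernel_bound d hd μ hμle (fun r => G r * G r) (2 * d * 2 ^ d / (d - α)) ((d + α) / 2)
      (by positivity) (by positivity) (by linarith) ?_ y)
    intro r hr
    by_cases h : r < 2
    · simp only [G, Set.indicator, Set.mem_Iio, h, if_true]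
      rw [← ENNReal.ofReal_mul (by positivity)]
      apply ENNReal.ofReal_le_ofReal
      rcases hr.eq_or_lt with h0 | h0
      · rw [← h0, hz, zero_mul, zero_mul]; positivity
      · exact g_sq_bound d hd α r hα0 hαd h0 h
    · simp [G, Set.indicator, h]
  have hBV : ENNReal.ofReal B * μ Set.univ ≤ ENNReal.ofReal M ^ 2 * ENNReal.ofReal D := by
    have h1 : μ Set.univ = ENNReal.ofReal v := by
      rw [hμ, Measure.restrict_apply_univ, hv, Measure.real, ENNReal.ofReal_toReal]
      exact measure_ball_lt_top.ne
    rw [h1, ← ENNReal.ofReal_mul hB0, ← ENNReal.ofReal_pow (by linarith), ← ENNReal.ofReal_mul (by positivity)]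
    apply ENNReal.ofReal_le_ofReal
    have h2 : B * v = b / (d - α) ^ 2 := by
      have : (d:ℝ) - (d + α) / 2 = (d - α) / 2 := by ring
      rw [hB, hb, this]
      field_simp
      ring
    rw [h2, hD, ← mul_div_assoc]
    gcongr
    nlinarith [mul_le_mul hM1 hM1 zero_le_one (by linarith), mul_le_mul hd' hd' zero_le_one (by linarith)]
  have hmain : ∀ F : Fin N → Fin N, (∀ i, F i ≠ i) →
      (∃ ρ : Fin N → ℝ ×ₗ (Fin N ×ₗ Fin N), ∀ i, F (F i) = i ∨ ρ (F i) < ρ i) →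
      ∫⁻ z, ∏ i, G (dist (z i) (z (F i))) ∂(Measure.pi fun _ : Fin N => μ)
        ≤ ENNReal.ofReal (M ^ N * D ^ (N / 2)) := by
    rintro F hF ⟨ρ, hρ⟩
    have h := graph_bound μ F ρ hF hρ G hGm (ENNReal.ofReal M) (ENNReal.ofReal D) (ENNReal.ofReal B)
      hA hBB hBV (by simpa using hD1) N Finset.univ (by simp) (by simp) (fun _ => 0)
    rw [lmarginal_univ, Finset.card_fin] at h
    rw [ENNReal.ofReal_mul (by positivity), ENNReal.ofReal_pow (by linarith), ENNReal.ofReal_pow (by linarith)]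
    exact h
  rw [volume_pi, Measure.restrict_pi_pi]
  obtain ⟨S, hS, hcard⟩ : ∃ S : Finset (Fin N → Fin N), (∀ F, F ∈ S ↔ ((∀ i, F i ≠ i) ∧
      (∃ ρ : Fin N → ℝ ×ₗ (Fin N ×ₗ Fin N), ∀ i, F (F i) = i ∨ ρ (F i) < ρ i))) ∧ S.card ≤ N ^ N := by
    refine ⟨Finset.univ.filter fun F => (∀ i, F i ≠ i) ∧
      (∃ ρ : Fin N → ℝ ×ₗ (Fin N ×ₗ Fin N), ∀ i, F (F i) = i ∨ ρ (F i) < ρ i), fun F => ?_, ?_⟩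
    · rw [Finset.mem_filter]
      exact and_iff_right (Finset.mem_univ F)
    · refine (Finset.card_filter_le _ _).trans ?_
      simp
  have hae : ∀ᵐ z ∂(Measure.pi fun _ : Fin N => μ), ∀ i, z i ∈ Metric.ball (0 : EuclideanSpace ℝ (Fin d)) 1 := by
    rw [hμ, ← Measure.restrict_pi_pi]
    filter_upwards [ae_restrict_mem (MeasurableSet.univ_pi fun _ => measurableSet_ball)] with z hz i
    exact hz i (Set.mem_univ i)
  have hpt : ∀ z : Fin N → EuclideanSpace ℝ (Fin d),
      (∀ i, z i ∈ Metric.ball (0 : EuclideanSpace ℝ (Fin d)) 1) →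
      ENNReal.ofReal (∏ i : Fin N,
          |Real.log (⨅ j : {j : Fin N // j ≠ i}, dist (z i) (z j.1))| ^ ((1 : ℝ) / 2)
            * (⨅ j : {j : Fin N // j ≠ i}, dist (z i) (z j.1)) ^ (-α / 2))
        ≤ ∑ F ∈ S, ∏ i, G (dist (z i) (z (F i))) := by
    intro z hzb
    obtain ⟨F, hF, hρ, hinf⟩ := nn_exists hN z
    have hFS : F ∈ S := (hS F).2 ⟨hF, hρ⟩
    have heq : ENNReal.ofReal (∏ i : Fin N,
          |Real.log (⨅ j : {j : Fin N // j ≠ i}, dist (z i) (z j.1))| ^ ((1 : ℝ) / 2)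
            * (⨅ j : {j : Fin N // j ≠ i}, dist (z i) (z j.1)) ^ (-α / 2))
        = ∏ i, G (dist (z i) (z (F i))) := by
      rw [ENNReal.ofReal_prod_of_nonneg]
      · refine Finset.prod_congr rfl fun i _ => ?_
        rw [hinf i]
        have h2 : dist (z i) (z (F i)) < 2 := by
          have h3 := dist_triangle_right (z i) (z (F i)) 0
          have h4 := hzb i
          have h5 := hzb (F i)
          rw [Metric.mem_ball] at h4 h5
          linarith
        simp only [G, Set.indicator, Set.mem_Iio, h2, if_true]
      · intro i _
        rw [hinf i]
        positivity
    rw [heq]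
    exact Finset.single_le_sum (f := fun F : Fin N → Fin N => ∏ i, G (dist (z i) (z (F i))))
      (fun _ _ => zero_le) hFS
  calc _ ≤ ∫⁻ z, ∑ F ∈ S, ∏ i, G (dist (z i) (z (F i))) ∂(Measure.pi fun _ : Fin N => μ) := by
        refine lintegral_mono_ae ?_
        filter_upwards [hae] with z hzb
        exact hpt z hzb
    _ = ∑ F ∈ S, ∫⁻ z, ∏ i, G (dist (z i) (z (F i))) ∂(Measure.pi fun _ : Fin N => μ) := by
        rw [lintegral_finsetSum]
        intro F _
        refine Finset.measurable_prod _ fun i _ => hGm.comp ?_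
        exact (measurable_pi_apply i).dist (measurable_pi_apply (F i))
    _ ≤ ∑ F ∈ S, ENNReal.ofReal (M ^ N * D ^ (N / 2)) := by
        refine Finset.sum_le_sum fun F hFS => ?_
        rw [hS] at hFS
        exact hmain F hFS.1 hFS.2
    _ = ENNReal.ofReal (S.card * (M ^ N * D ^ (N / 2))) := by
        rw [Finset.sum_const, nsmul_eq_mul, ENNReal.ofReal_mul (Nat.cast_nonneg S.card), ENNReal.ofReal_natCast]
    _ ≤ _ := by
        apply ENNReal.ofReal_le_ofReal
        have hc : (S.card : ℝ) ≤ (N:ℝ) ^ N := by exact_mod_cast hcard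
        have h1 : ((d:ℝ) - α) ^ (-(2 * ((N / 2 : ℕ) : ℝ))) = (((d:ℝ) - α) ^ (2 * (N / 2)))⁻¹ := by
          rw [Real.rpow_neg hdα.le, ← Real.rpow_natCast]
          push_cast
          rfl
        have h2 : D ^ (N / 2) ≤ d ^ N * (((d:ℝ) - α) ^ (2 * (N / 2)))⁻¹ := by
          rw [hD, div_pow, ← pow_mul, ← pow_mul, div_eq_mul_inv]
          gcongr
          · omega
        rw [h1, mul_pow]
        calc (S.card : ℝ) * (M ^ N * D ^ (N / 2)) ≤ (N:ℝ) ^ N * (M ^ N * (d ^ N * (((d:ℝ) - α) ^ (2 * (N / 2)))⁻¹)) := by gcongr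
          _ = _ := by ring
end

section
/- Let d ≥ 1. There exists a constant C > 0, depending only on d, such that for every integer N ≥ 2 and every β ∈ (0, √d), ∫_{B(0,1)^N} ∏_{i=1}^N |log min_{j ≠ i} |z_i − z_j|| · (min_{j ≠ i} |z_i − z_j|)^{−β²/2} dz_1 … dz_N ≤ C^N (d − β²)^{−3⌊N/2⌋} N^N. -/
open MeasureTheory

lemma aux_polar (d : ℕ) (hd : 1 ≤ d) (η : ℝ) (hη : 0 < η) (hηd : η ≤ d) :
    ∫⁻ x : EuclideanSpace ℝ (Fin d),
      ENNReal.ofReal ((Set.Ioc (0:ℝ) 2).indicator (fun r => r ^ (η - d)) ‖x‖)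
    ≤ ENNReal.ofReal ((d * (volume : Measure (EuclideanSpace ℝ (Fin d))).real (Metric.ball 0 1)
        * 2 ^ (d:ℝ)) / η) := by
  have : Nonempty (Fin d) := ⟨⟨0, hd⟩⟩
  have : Nontrivial (EuclideanSpace ℝ (Fin d)) := inferInstance
  set φ : ℝ → ℝ := (Set.Ioc (0:ℝ) 2).indicator (fun r => r ^ (η - d)) with hφ
  have hφ0 : ∀ r, 0 ≤ φ r := fun r =>
    Set.indicator_nonneg (fun x hx => Real.rpow_nonneg hx.1.le _) r
  have hfin : Module.finrank ℝ (EuclideanSpace ℝ (Fin d)) = d := by simp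
  have hprod : ∀ y ∈ Set.Ioi (0:ℝ), y ^ (d - 1) • φ y
      = (Set.Ioc (0:ℝ) 2).indicator (fun r => r ^ (η - 1)) y := by
    intro y hy
    have hy : 0 < y := hy
    by_cases h : y ∈ Set.Ioc (0:ℝ) 2
    · rw [hφ, Set.indicator_of_mem h, Set.indicator_of_mem h, smul_eq_mul, ← Real.rpow_natCast,
        ← Real.rpow_add hy]
      congr 1
      push_cast [hd]; ring
    · rw [hφ, Set.indicator_of_notMem h, Set.indicator_of_notMem h, smul_zero]
  have hii : IntegrableOn (fun r : ℝ => r ^ (η - 1)) (Set.Ioc 0 2) := by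
    have := intervalIntegral.intervalIntegrable_rpow' (a := 0) (b := 2) (r := η - 1) (by linarith)
    rwa [intervalIntegrable_iff_integrableOn_Ioc_of_le (by norm_num)] at this
  have hint : Integrable (fun x : EuclideanSpace ℝ (Fin d) => φ ‖x‖) := by
    rw [integrable_fun_norm_addHaar volume, hfin]
    rw [integrableOn_congr_fun hprod measurableSet_Ioi]
    exact ((integrable_indicator_iff measurableSet_Ioc).2 hii).integrableOn
  rw [← ofReal_integral_eq_lintegral_ofReal hint (Filter.Eventually.of_forall fun x => hφ0 _)]
  apply ENNReal.ofReal_le_ofReal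
  rw [integral_fun_norm_addHaar volume, hfin, setIntegral_congr_fun measurableSet_Ioi hprod,
    setIntegral_indicator measurableSet_Ioc]
  have : Set.Ioi (0:ℝ) ∩ Set.Ioc 0 2 = Set.Ioc 0 2 := by
    ext x; simp only [Set.mem_inter_iff, Set.mem_Ioi, Set.mem_Ioc]; tauto
  rw [this, ← intervalIntegral.integral_of_le (by norm_num), integral_rpow (Or.inl (by linarith))]
  rw [sub_add_cancel, Real.zero_rpow hη.ne', sub_zero, nsmul_eq_mul, smul_eq_mul, ← mul_assoc,
    mul_div_assoc]
  have h2 : (2:ℝ) ^ η ≤ 2 ^ (d:ℝ) := Real.rpow_le_rpow_of_exponent_le (by norm_num) hηd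
  gcongr

/-- The truncated kernel. -/
noncomputable def auxG (a r : ℝ) : ENNReal :=
  (Set.Ioc (0:ℝ) 2).indicator (fun r => ENNReal.ofReal (|Real.log r| * r ^ (-a))) r

lemma auxG_meas (a : ℝ) : Measurable (auxG a) := by
  unfold auxG
  refine Measurable.indicator ?_ measurableSet_Ioc
  fun_prop

lemma aux_log1 {r t : ℝ} (h : 0 < r) (h1 : r ≤ 1) (ht : 0 < t) :
    |Real.log r| ≤ 1 / t * r ^ (-t) := by
  have := (Real.abs_log_mul_self_rpow_lt r t h h1 ht).le
  have hp := Real.rpow_pos_of_pos h t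
  rw [abs_mul, abs_of_pos hp] at this
  rw [Real.rpow_neg h.le, ← div_eq_mul_inv, le_div_iff₀ hp]
  exact this

lemma aux_log2 {r : ℝ} (h1 : 1 ≤ r) (h : r ≤ 2) : |Real.log r| ≤ 1 := by
  rw [abs_of_nonneg (Real.log_nonneg h1)]
  have := Real.log_le_sub_one_of_pos (show 0 < r by linarith)
  linarith

/-- pointwise bound -/
lemma aux_pt {D : ℝ} {s t r : ℝ} (ht : 0 < t) (hs : 0 ≤ s) (hst : s + t ≤ D)
   (h0 : 0 < r) (h2 : r ≤ 2) :
    |Real.log r| * r ^ (-s) ≤ (1 / t + 2 ^ D) * r ^ (-(s + t)) := by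
  rcases le_total r 1 with h | h
  · calc |Real.log r| * r ^ (-s) ≤ (1 / t * r ^ (-t)) * r ^ (-s) := by
          gcongr; exact aux_log1 h0 h ht
      _ = 1 / t * r ^ (-(s+t)) := by
          rw [mul_assoc, ← Real.rpow_add h0]; congr 2; ring
      _ ≤ _ := by gcongr; have : (0:ℝ) < 2 ^ D := by positivity
                  linarith
  · have e1 : r ^ (-s) ≤ 1 := Real.rpow_le_one_of_one_le_of_nonpos h (by linarith)
    have e2 : (2:ℝ) ^ (-D) ≤ r ^ (-(s+t)) := by
      calc (2:ℝ) ^ (-D) ≤ 2 ^ (-(s+t)) :=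
            Real.rpow_le_rpow_of_exponent_le (by norm_num) (by linarith)
        _ ≤ _ := Real.rpow_le_rpow_of_nonpos h0 h2 (by linarith)
    calc |Real.log r| * r ^ (-s) ≤ 1 * 1 := by
          gcongr; exact aux_log2 h h2
      _ = 2 ^ D * 2 ^ (-D) := by rw [← Real.rpow_add (by norm_num)]; simp
      _ ≤ (1/t + 2 ^ D) * r ^ (-(s+t)) := by
          gcongr
          have : 0 < 1/t := by positivity
          linarith

/-- Generic integral bound. -/
lemma aux_int (d : ℕ) (hd : 1 ≤ d) (η M : ℝ) (hM : 0 ≤ M) (hη : 0 < η) (hηd : η ≤ d)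
    (h : ℝ → ENNReal)
    (hh : ∀ r, h r ≤ ENNReal.ofReal (M * (Set.Ioc (0:ℝ) 2).indicator (fun r => r ^ (η - d)) r))
    (y : EuclideanSpace ℝ (Fin d)) :
    ∫⁻ x in Metric.ball (0 : EuclideanSpace ℝ (Fin d)) 1, h (dist x y) ≤
      ENNReal.ofReal (M * ((d * (volume : Measure (EuclideanSpace ℝ (Fin d))).real
        (Metric.ball 0 1) * 2 ^ (d:ℝ)) / η)) := by
  calc _ ≤ ∫⁻ x, h (dist x y) := setLIntegral_le_lintegral _ _
    _ = ∫⁻ x : EuclideanSpace ℝ (Fin d), h ‖x - y‖ := by simp_rw [dist_eq_norm]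
    _ = ∫⁻ x : EuclideanSpace ℝ (Fin d), h ‖x‖ :=
        lintegral_sub_right_eq_self (fun x : EuclideanSpace ℝ (Fin d) => h ‖x‖) y
    _ ≤ ∫⁻ x : EuclideanSpace ℝ (Fin d), ENNReal.ofReal M *
        ENNReal.ofReal ((Set.Ioc (0:ℝ) 2).indicator (fun r => r ^ (η - d)) ‖x‖) := by
        refine lintegral_mono fun x => ?_
        rw [← ENNReal.ofReal_mul hM]; exact hh _
    _ ≤ _ := by
        rw [lintegral_const_mul' _ _ ENNReal.ofReal_ne_top, ENNReal.ofReal_mul hM]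
        gcongr
        exact aux_polar d hd η hη hηd

lemma aux_A (d : ℕ) (hd : 1 ≤ d) : ∃ A : ℝ, ∀ a : ℝ, 0 ≤ a → a ≤ d / 2 →
    ∀ y : EuclideanSpace ℝ (Fin d),
    ∫⁻ x in Metric.ball (0 : EuclideanSpace ℝ (Fin d)) 1, auxG a (dist x y) ≤
      ENNReal.ofReal A := by
  have hd' : (1:ℝ) ≤ d := by exact_mod_cast hd
  refine ⟨_, fun a ha ha2 y => aux_int d hd (d/4) (1 / (d/4) + 2 ^ (d:ℝ)) (by positivity)
    (by positivity) (by linarith) _ (fun r => ?_) y⟩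
  unfold auxG
  by_cases h : r ∈ Set.Ioc (0:ℝ) 2
  · rw [Set.indicator_of_mem h, Set.indicator_of_mem h]
    apply ENNReal.ofReal_le_ofReal
    have h0 := h.1
    have := aux_pt (D := d) (s := a) (t := 3 * d / 4 - a) (by linarith) ha
      (by linarith) h.1 h.2
    refine this.trans ?_
    have e : -(a + (3 * d / 4 - a)) = (d / 4 - d : ℝ) := by ring
    rw [e]
    gcongr
    linarith
  · rw [Set.indicator_of_notMem h]; exact zero_le

lemma aux_B (d : ℕ) (hd : 1 ≤ d) : ∃ c : ℝ, 1 ≤ c ∧ (d:ℝ) ^ 3 ≤ c ∧ ∀ b : ℝ, 0 < b → b < d →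
    ∀ y : EuclideanSpace ℝ (Fin d),
    ∫⁻ x in Metric.ball (0 : EuclideanSpace ℝ (Fin d)) 1, auxG (b / 2) (dist x y) ^ 2 ≤
      ENNReal.ofReal (c * (d - b) ^ (-3 : ℝ)) := by
  have hd' : (1:ℝ) ≤ d := by exact_mod_cast hd
  set V : ℝ := d * (volume : Measure (EuclideanSpace ℝ (Fin d))).real
        (Metric.ball 0 1) * 2 ^ (d:ℝ)
  have hV : 0 ≤ V := by positivity
  refine ⟨(4 + 2 ^ (d:ℝ) * d) ^ 2 * V * 2 + d ^ 3, ?_, ?_, fun b hb hbd y => ?_⟩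
  · have : 1 ≤ (d:ℝ)^3 := one_le_pow₀ hd'
    have : 0 ≤ (4 + 2 ^ (d:ℝ) * d) ^ 2 * V * 2 := by positivity
    linarith
  · have : 0 ≤ (4 + 2 ^ (d:ℝ) * d) ^ 2 * V * 2 := by positivity
    linarith
  have hδ : 0 < d - b := by linarith
  refine (aux_int d hd ((d-b)/2) ((1 / ((d-b)/4) + 2 ^ (d:ℝ))^2) (by positivity)
    (by positivity) (by linarith) (fun r => auxG (b/2) r ^ 2) (fun r => ?_) y).trans ?_
  · unfold auxG
    by_cases h : r ∈ Set.Ioc (0:ℝ) 2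
    · have h0 := h.1
      rw [Set.indicator_of_mem h, Set.indicator_of_mem h, ← ENNReal.ofReal_pow (by positivity)]
      apply ENNReal.ofReal_le_ofReal
      have := aux_pt (D := d) (s := b / 2) (t := (d-b) / 4) (by positivity) (by linarith)
        (by linarith) h.1 h.2
      have h3 : r ^ ((d-b)/2 - d) = (r ^ (-(b/2 + (d-b)/4))) ^ 2 := by
        rw [← Real.rpow_mul_natCast h0.le]; congr 1; push_cast; ring
      rw [h3, ← mul_pow]
      exact pow_le_pow_left₀ (by positivity) this 2
    · rw [Set.indicator_of_notMem h]; simp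
  · apply ENNReal.ofReal_le_ofReal
    have e : (d - b : ℝ) ^ (-3:ℝ) = ((d-b)^3)⁻¹ := by
      rw [Real.rpow_neg hδ.le]; norm_cast
    rw [e]
    have e2 : 1 / ((d-b)/4) + 2 ^ (d:ℝ) ≤ (4 + 2 ^ (d:ℝ) * d) / (d-b) := by
      rw [add_div]
      apply add_le_add
      · apply le_of_eq; field_simp
      · rw [le_div_iff₀ hδ]; gcongr; linarith
    calc _ ≤ ((4 + 2 ^ (d:ℝ) * d) / (d-b))^2 * (V / ((d-b)/2)) := by gcongr
      _ = ((4 + 2 ^ (d:ℝ) * d)^2 * V * 2) * ((d-b)^3)⁻¹ := by field_simp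
      _ ≤ _ := by gcongr; have : (0:ℝ) ≤ d^3 := by positivity
                  linarith


lemma aux_tree {E : Type*} [PseudoMetricSpace E] [MeasurableSpace E] [OpensMeasurableSpace E]
    [SecondCountableTopology E]
    (μ : Measure E) [SigmaFinite μ] (g : ℝ → ENNReal) (hg : Measurable g) (K B : ENNReal)
    (hK : 1 ≤ K) (hB : 1 ≤ B) (hKu : μ Set.univ ≤ K)
    (hA : ∀ y, ∫⁻ x, g (dist x y) ∂μ ≤ K) (hBB : ∀ y, ∫⁻ x, g (dist x y) ^ 2 ∂μ ≤ B)
    {N : ℕ} (F : Fin N → Fin N) (hF : ∀ i, F i ≠ i)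
    (hgood : ∀ i, ∀ n, 0 < n → F^[n] i = i → F (F i) = i) :
    ∀ (n : ℕ) (S : Finset (Fin N)), S.card = n → (∀ i ∈ S, F i ∈ S) → ∀ z : Fin N → E,
      lmarginal (fun _ => μ) S (fun z => ∏ i ∈ S, g (dist (z i) (z (F i)))) z
        ≤ K ^ n * B ^ (n / 2) := by
  intro n
  have hmeas : ∀ S : Finset (Fin N), Measurable
      (fun z : Fin N → E => ∏ i ∈ S, g (dist (z i) (z (F i)))) := by
    intro S
    refine Finset.measurable_prod _ fun i _ => hg.comp ?_
    exact (measurable_pi_apply i).dist (measurable_pi_apply (F i))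
  have hgd : ∀ y : E, Measurable (fun x => g (dist x y)) := fun y =>
    hg.comp (measurable_id.dist measurable_const)
  induction n using Nat.strong_induction_on with
  | _ n ih =>
  intro S hS hcl z
  rcases Finset.eq_empty_or_nonempty S with rfl | hne
  · simp at hS; subst hS; simp
  by_cases hleaf : ∃ i ∈ S, ∀ j ∈ S, F j ≠ i
  · obtain ⟨i, hi, hij⟩ := hleaf
    have hc : (S.erase i).card = n - 1 := by rw [Finset.card_erase_of_mem hi, hS]
    have hn : 0 < n := hS ▸ Finset.card_pos.2 hne
    have key := ih (n-1) (by omega) (S.erase i) hc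
      (fun j hj => Finset.mem_erase.2 ⟨hij j (Finset.mem_of_mem_erase hj),
        hcl j (Finset.mem_of_mem_erase hj)⟩) z
    rw [lmarginal_erase' _ (hmeas S) hi]
    have hle : ∀ x : Fin N → E, ∫⁻ xi, (∏ j ∈ S, g (dist (Function.update x i xi j)
          (Function.update x i xi (F j)))) ∂μ
        ≤ K * ∏ j ∈ S.erase i, g (dist (x j) (x (F j))) := by
      intro x
      have : ∀ xi, (∏ j ∈ S, g (dist (Function.update x i xi j)
          (Function.update x i xi (F j)))) = g (dist xi (x (F i))) *
            ∏ j ∈ S.erase i, g (dist (x j) (x (F j))) := by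
        intro xi
        rw [← Finset.mul_prod_erase S _ hi]
        congr 1
        · rw [Function.update_self, Function.update_of_ne (hF i)]
        · refine Finset.prod_congr rfl fun j hj => ?_
          rw [Function.update_of_ne (Finset.ne_of_mem_erase hj),
            Function.update_of_ne (hij j (Finset.mem_of_mem_erase hj))]
      simp_rw [this]
      rw [lintegral_mul_const _ (hgd _)]
      gcongr
      exact hA _
    calc _ ≤ lmarginal (fun _ => μ) (S.erase i)
            (fun x => K * ∏ j ∈ S.erase i, g (dist (x j) (x (F j)))) z := lmarginal_mono hle z
      _ = K * lmarginal (fun _ => μ) (S.erase i)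
            (fun x => ∏ j ∈ S.erase i, g (dist (x j) (x (F j)))) z := by
          exact lintegral_const_mul _ ((hmeas _).comp measurable_updateFinset)
      _ ≤ K * (K ^ (n-1) * B ^ ((n-1)/2)) := by gcongr
      _ = K ^ n * B ^ ((n-1)/2) := by
          rw [← mul_assoc, ← pow_succ', Nat.sub_add_cancel hn]
      _ ≤ _ := by
          exact mul_le_mul_right (pow_le_pow_right₀ hB (by omega)) _
  · push Not at hleaf
    have hinj : Set.InjOn F S := by
      apply Finset.injOn_of_surjOn_of_card_le F (s := S) (t := S) hcl _ le_rfl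
      intro i hi
      obtain ⟨j, hj, e⟩ := hleaf i hi
      exact ⟨j, hj, e⟩
    have hinv : ∀ i ∈ S, F (F i) = i := by
      intro i hi
      have hmaps : Set.MapsTo F S S := hcl
      have : ∃ a b, a < b ∧ F^[a] i = F^[b] i := by
        obtain ⟨a, b, hab, e⟩ := Finite.exists_ne_map_eq_of_infinite (fun n => F^[n] i)
        rcases lt_or_gt_of_ne hab with h | h
        · exact ⟨a, b, h, e⟩
        · exact ⟨b, a, h, e.symm⟩
      obtain ⟨a, b, hab, e⟩ := this
      apply hgood i (b - a) (by omega)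
      have e2 : F^[a] (F^[b-a] i) = F^[a] i := by
        rw [← Function.iterate_add_apply, e]; congr 2; omega
      exact (hinj.iterate hmaps a) (hmaps.iterate _ hi) hi e2
    obtain ⟨i, hi⟩ := hne
    set j := F i with hj
    have hjS : j ∈ S := hcl i hi
    have hji : j ≠ i := hF i
    have hFj : F j = i := hinv i hi
    have hjS' : j ∈ S.erase i := Finset.mem_erase.2 ⟨hji, hjS⟩
    set T := (S.erase i).erase j with hT
    have hTS : ∀ k ∈ T, k ∈ S ∧ k ≠ i ∧ k ≠ j := by
      intro k hk
      simp only [hT, Finset.mem_erase] at hk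
      tauto
    have hFT : ∀ k ∈ T, F k ≠ i ∧ F k ≠ j := by
      intro k hk
      obtain ⟨h1, h2, h3⟩ := hTS k hk
      refine ⟨fun h => h3 ?_, fun h => h2 ?_⟩
      · rw [hj, ← h, hinv k h1]
      · rw [← hFj, ← h, hinv k h1]
    have hc : T.card = n - 2 := by
      rw [hT, Finset.card_erase_of_mem hjS', Finset.card_erase_of_mem hi, hS]; omega
    have hn : 2 ≤ n := by
      have h1 := Finset.card_erase_of_mem hi
      have h2 := Finset.card_pos.2 ⟨j, hjS'⟩
      omega
    have key := ih (n-2) (by omega) T hc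
      (fun k hk => by
        simp only [hT, Finset.mem_erase]
        exact ⟨(hFT k hk).2, (hFT k hk).1, hcl k (hTS k hk).1⟩) z
    have hle1 : ∀ x : Fin N → E, ∫⁻ xi, (∏ j ∈ S, g (dist (Function.update x i xi j)
          (Function.update x i xi (F j)))) ∂μ
        ≤ B * ∏ k ∈ T, g (dist (x k) (x (F k))) := by
      intro x
      have : ∀ xi, (∏ j ∈ S, g (dist (Function.update x i xi j)
          (Function.update x i xi (F j)))) = g (dist xi (x j)) ^ 2 *
            ∏ k ∈ T, g (dist (x k) (x (F k))) := by
        intro xi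
        rw [← Finset.mul_prod_erase S _ hi, ← Finset.mul_prod_erase _ _ hjS', ← mul_assoc]
        congr 1
        · rw [hFj, ← hj, Function.update_self, Function.update_of_ne hji, dist_comm (x j), sq]
        · refine Finset.prod_congr rfl fun k hk => ?_
          rw [Function.update_of_ne (hTS k hk).2.1, Function.update_of_ne (hFT k hk).1]
      simp_rw [this]
      rw [lintegral_mul_const _ ((hgd _).pow_const 2)]
      gcongr
      exact hBB _
    have hle2 : ∀ x : Fin N → E, ∫⁻ xj, (B * ∏ k ∈ T, g (dist (Function.update x j xj k)
          (Function.update x j xj (F k)))) ∂μ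
        ≤ (B * K) * ∏ k ∈ T, g (dist (x k) (x (F k))) := by
      intro x
      have : ∀ xj, (∏ k ∈ T, g (dist (Function.update x j xj k)
          (Function.update x j xj (F k)))) = ∏ k ∈ T, g (dist (x k) (x (F k))) := by
        intro xj
        refine Finset.prod_congr rfl fun k hk => ?_
        rw [Function.update_of_ne (hTS k hk).2.2, Function.update_of_ne (hFT k hk).2]
      simp_rw [this]
      rw [lintegral_const, mul_right_comm]
      gcongr
    calc _ = lmarginal (fun _ => μ) (S.erase i) (fun x => ∫⁻ xi, (∏ j ∈ S,
              g (dist (Function.update x i xi j) (Function.update x i xi (F j)))) ∂μ) z := by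
          rw [lmarginal_erase' _ (hmeas S) hi]
      _ ≤ lmarginal (fun _ => μ) (S.erase i)
            (fun x => B * ∏ k ∈ T, g (dist (x k) (x (F k)))) z := lmarginal_mono hle1 z
      _ = lmarginal (fun _ => μ) T (fun x => ∫⁻ xj, (B * ∏ k ∈ T,
              g (dist (Function.update x j xj k) (Function.update x j xj (F k)))) ∂μ) z := by
          rw [lmarginal_erase' _ ((hmeas T).const_mul B) hjS']
      _ ≤ lmarginal (fun _ => μ) T
            (fun x => (B * K) * ∏ k ∈ T, g (dist (x k) (x (F k)))) z := lmarginal_mono hle2 z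
      _ = (B * K) * lmarginal (fun _ => μ) T
            (fun x => ∏ k ∈ T, g (dist (x k) (x (F k)))) z := by
          exact lintegral_const_mul _ ((hmeas _).comp measurable_updateFinset)
      _ ≤ (B * K) * (K ^ (n-2) * B ^ ((n-2)/2)) := by gcongr
      _ = K ^ (n - 2 + 1) * B ^ ((n-2)/2 + 1) := by ring
      _ ≤ _ := by
          exact mul_le_mul' (pow_le_pow_right₀ hK (by omega)) (pow_le_pow_right₀ hB (by omega))

lemma aux_choice {E : Type*} [PseudoMetricSpace E] {N : ℕ} (hN : 2 ≤ N) (z : Fin N → E) :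
    ∃ F : Fin N → Fin N, (∀ i, F i ≠ i) ∧
      (∀ i, ∀ n, 0 < n → F^[n] i = i → F (F i) = i) ∧
      ∀ i, (⨅ j : {j : Fin N // j ≠ i}, dist (z i) (z j.1)) = dist (z i) (z (F i)) := by
  classical
  let w : Fin N → Fin N → ℝ ×ₗ Fin (Fintype.card (Sym2 (Fin N))) := fun i j =>
    toLex (dist (z i) (z j), Fintype.equivFin _ s(i, j))
  have hsymm : ∀ i j, w i j = w j i := by
    intro i j; simp only [w, dist_comm, Sym2.eq_swap]
  have hmin : ∀ i, ∃ j, j ≠ i ∧ ∀ k, k ≠ i → w i j ≤ w i k := by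
    intro i
    have : Nontrivial (Fin N) := Fin.nontrivial_iff_two_le.2 hN
    obtain ⟨k, hk⟩ := exists_ne i
    obtain ⟨j, hj, h⟩ := Finset.exists_min_image (Finset.univ.erase i) (w i) ⟨k, by simp [hk]⟩
    exact ⟨j, by simpa using hj, fun k hk => h k (by simp [hk])⟩
  choose F hF hFm using hmin
  refine ⟨F, hF, ?_, fun i => ?_⟩
  · intro i n hn hper
    have hstep : ∀ k, w (F k) (F (F k)) ≤ w k (F k) := by
      intro k
      rw [hsymm k]
      exact hFm (F k) k (hF k).symm
    have hanti : Antitone (fun n => w (F^[n] i) (F (F^[n] i))) := by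
      apply antitone_nat_of_succ_le
      intro m
      rw [Function.iterate_succ_apply']
      exact hstep _
    have h1 : w i (F i) ≤ w (F i) (F (F i)) := by
      have := hanti (show 1 ≤ n from hn)
      simpa [hper] using this
    have h2 := le_antisymm h1 (hstep i)
    have h3 : s(i, F i) = s(F i, F (F i)) := by
      have := congrArg (fun p => (ofLex p).2) h2
      exact (Fintype.equivFin _).injective this
    rw [Sym2.eq_swap, Sym2.congr_right] at h3
    exact h3.symm
  · have hle : ∀ k, k ≠ i → dist (z i) (z (F i)) ≤ dist (z i) (z k) := by
      intro k hk
      have := hFm i k hk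
      rw [Prod.Lex.le_iff] at this
      rcases this with h | h
      · exact h.le
      · exact h.1.le
    have : Nonempty {j : Fin N // j ≠ i} := ⟨⟨F i, hF i⟩⟩
    apply le_antisymm
    · exact ciInf_le (f := fun j : {j : Fin N // j ≠ i} => dist (z i) (z j.1))
        ⟨0, by rintro _ ⟨j, rfl⟩; exact dist_nonneg⟩ ⟨F i, hF i⟩
    · exact le_ciInf fun j => hle j.1 j.2

/-- **Nearest-neighbour integral bound with logarithmic factors.**
There is `C > 0` (depending only on `d`) such that for all `N ≥ 2` and
`β ∈ (0, √d)`,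
`∫_{B(0,1)^N} ∏_i |log min_{j≠i}|z_i−z_j|| (min_{j≠i}|z_i−z_j|)^{−β²/2} dz
  ≤ C^N (d−β²)^{−3⌊N/2⌋} N^N`. -/
theorem stmt_7 (d : ℕ) (hd : 1 ≤ d) :
    ∃ C : ℝ, 0 < C ∧ ∀ N : ℕ, 2 ≤ N → ∀ β : ℝ, 0 < β → β < Real.sqrt d →
      (∫⁻ z : Fin N → EuclideanSpace ℝ (Fin d) in
          Set.univ.pi (fun _ : Fin N => Metric.ball (0 : EuclideanSpace ℝ (Fin d)) 1),
        ENNReal.ofReal (∏ i : Fin N,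
          |Real.log (⨅ j : {j : Fin N // j ≠ i}, dist (z i) (z j.1))|
            * (⨅ j : {j : Fin N // j ≠ i}, dist (z i) (z j.1)) ^ (-(β ^ 2) / 2)))
      ≤ ENNReal.ofReal
          (C ^ N * ((d : ℝ) - β ^ 2) ^ (-(3 * ((N / 2 : ℕ) : ℝ)))
            * (N : ℝ) ^ N) := by
  classical
  obtain ⟨A, hA⟩ := aux_A d hd
  obtain ⟨c, hc1, hcd, hB⟩ := aux_B d hd
  set μ : Measure (EuclideanSpace ℝ (Fin d)) :=
    volume.restrict (Metric.ball (0 : EuclideanSpace ℝ (Fin d)) 1) with hμ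
  set K : ℝ := 1 + |A| + (volume : Measure (EuclideanSpace ℝ (Fin d))).real (Metric.ball 0 1)
    with hK
  have hVn : 0 ≤ (volume : Measure (EuclideanSpace ℝ (Fin d))).real (Metric.ball 0 1) :=
    measureReal_nonneg
  have hK1 : 1 ≤ K := by have := abs_nonneg A; linarith
  have hKA : A ≤ K := by have := le_abs_self A; linarith
  have hKV : (volume : Measure (EuclideanSpace ℝ (Fin d))).real (Metric.ball 0 1) ≤ K := by
    have := abs_nonneg A; linarith
  refine ⟨K * c, by positivity, fun N hN β hβ hβd => ?_⟩
  have hb : 0 < β ^ 2 := by positivity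
  have hbd : β ^ 2 < d := by
    have := Real.lt_sqrt hβ.le |>.1 hβd
    exact this
  have hδ : 0 < d - β ^ 2 := by linarith
  set B : ℝ := c * (d - β ^ 2) ^ (-3:ℝ) with hBdef
  have hB1 : 1 ≤ B := by
    have e : (d - β ^ 2 : ℝ) ^ (-3:ℝ) = ((d - β ^ 2)^3)⁻¹ := by
      rw [Real.rpow_neg hδ.le]; norm_cast
    rw [hBdef, e, ← div_eq_mul_inv, one_le_div (by positivity)]
    refine le_trans ?_ hcd
    gcongr
    linarith
  set g := auxG (β ^ 2 / 2) with hg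
  have htree : ∀ F : Fin N → Fin N, (∀ i, F i ≠ i) →
      (∀ i, ∀ n, 0 < n → F^[n] i = i → F (F i) = i) →
      ∫⁻ z, (∏ i, g (dist (z i) (z (F i)))) ∂(Measure.pi fun _ : Fin N => μ)
        ≤ ENNReal.ofReal K ^ N * ENNReal.ofReal B ^ (N / 2) := by
    intro F h1 h2
    rw [lintegral_eq_lmarginal_univ (fun _ => 0)]
    refine aux_tree μ g (auxG_meas _) _ _ ?_ ?_ ?_ ?_ ?_ F h1 h2 N Finset.univ (by simp)
      (by simp) _
    · exact ENNReal.one_le_ofReal.2 hK1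
    · exact ENNReal.one_le_ofReal.2 hB1
    · rw [hμ, Measure.restrict_apply_univ]
      rw [ENNReal.le_ofReal_iff_toReal_le measure_ball_lt_top.ne (by linarith)]
      exact hKV
    · intro y
      exact (hA (β ^ 2 / 2) (by positivity) (by linarith) y).trans (ENNReal.ofReal_le_ofReal hKA)
    · intro y
      exact hB (β ^ 2) hb hbd y
  set P : Finset (Fin N → Fin N) := Finset.univ.filter (fun F => (∀ i, F i ≠ i) ∧
      (∀ i, ∀ n, 0 < n → F^[n] i = i → F (F i) = i)) with hP
  have hmeas : ∀ F : Fin N → Fin N, Measurable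
      (fun z : Fin N → EuclideanSpace ℝ (Fin d) => ∏ i, g (dist (z i) (z (F i)))) := by
    intro F
    refine Finset.measurable_prod _ fun i _ => (auxG_meas _).comp ?_
    exact (measurable_pi_apply i).dist (measurable_pi_apply (F i))
  have hPc : (P.card : ENNReal) ≤ (N : ENNReal) ^ N := by
    have : P.card ≤ N ^ N := by
      refine (Finset.card_le_univ P).trans ?_
      simp
    exact_mod_cast this
  calc _ ≤ ∫⁻ z : Fin N → EuclideanSpace ℝ (Fin d) in
          Set.univ.pi (fun _ : Fin N => Metric.ball (0 : EuclideanSpace ℝ (Fin d)) 1),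
          ∑ F ∈ P, ∏ i, g (dist (z i) (z (F i))) := by
        refine setLIntegral_mono' (MeasurableSet.univ_pi fun _ => measurableSet_ball) ?_
        intro z hz
        obtain ⟨F, h1, h2, h3⟩ := aux_choice hN z
        refine le_trans ?_ (Finset.single_le_sum
          (f := fun F : Fin N → Fin N => ∏ i, g (dist (z i) (z (F i)))) (fun _ _ => zero_le)
          (show F ∈ P by simp only [hP, Finset.mem_filter, Finset.mem_univ, true_and]
                         exact ⟨h1, h2⟩))
        simp_rw [h3]
        rw [ENNReal.ofReal_prod_of_nonneg (fun i _ => by positivity)]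
        refine Finset.prod_le_prod' fun i _ => ?_
        rw [hg, auxG]
        rcases (dist_nonneg (x := z i) (y := z (F i))).eq_or_lt with h0 | h0
        · rw [← h0]; simp
        · have hd2 : dist (z i) (z (F i)) ≤ 2 := by
            have e1 := hz i (Set.mem_univ _)
            have e2 := hz (F i) (Set.mem_univ _)
            rw [Metric.mem_ball] at e1 e2
            have := dist_triangle_right (z i) (z (F i)) 0
            linarith
          rw [Set.indicator_of_mem (Set.mem_Ioc.2 ⟨h0, hd2⟩), neg_div]
    _ = ∑ F ∈ P, ∫⁻ z, (∏ i, g (dist (z i) (z (F i)))) ∂(Measure.pi fun _ : Fin N => μ) := by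
        rw [volume_pi, Measure.restrict_pi_pi, lintegral_finsetSum _ fun F _ => hmeas F]
    _ ≤ ∑ F ∈ P, ENNReal.ofReal K ^ N * ENNReal.ofReal B ^ (N / 2) := by
        refine Finset.sum_le_sum fun F hF => ?_
        simp only [hP, Finset.mem_filter, Finset.mem_univ, true_and] at hF
        exact htree F hF.1 hF.2
    _ ≤ (N : ENNReal) ^ N * (ENNReal.ofReal K ^ N * ENNReal.ofReal B ^ (N / 2)) := by
        rw [Finset.sum_const, nsmul_eq_mul]
        gcongr
    _ = ENNReal.ofReal ((N:ℝ) ^ N * (K ^ N * B ^ (N / 2))) := by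
        rw [ENNReal.ofReal_mul (p := (N:ℝ) ^ N) (by positivity),
          ENNReal.ofReal_mul (p := K ^ N) (by positivity),
          ENNReal.ofReal_pow (p := (N:ℝ)) (by positivity),
          ENNReal.ofReal_pow (p := K) (by positivity),
          ENNReal.ofReal_pow (p := B) (by positivity), ENNReal.ofReal_natCast]
    _ ≤ _ := by
        apply ENNReal.ofReal_le_ofReal
        have e : ((d : ℝ) - β ^ 2) ^ (-(3 * ((N / 2 : ℕ) : ℝ)))
            = (((d : ℝ) - β ^ 2) ^ (-3:ℝ)) ^ (N / 2) := by
          rw [← Real.rpow_mul_natCast hδ.le]; congr 1; ring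
        have hcp : c ^ (N / 2) ≤ c ^ N := pow_le_pow_right₀ hc1 (Nat.div_le_self _ _)
        rw [e, hBdef, mul_pow, mul_pow, mul_comm ((N:ℝ) ^ N), ← mul_assoc]
        gcongr
end
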